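/- arXiv:2010.12856 — 5 statements merged into one kernel-verified Lean document; each statement's English description precedes it below -/
import Mathlib

section
/- If h : (0,∞) → (0,∞) is operator monotone, then for all positive definite matrices A, B and all t ∈ [0,1], h(A !_t B) ≤ h(A) !_t h(B), where X !_t Y = ((1-t)X⁻¹ + tY⁻¹)⁻¹. -/
open scoped ComplexOrder Kronecker

/-- Matrix power via the continuous functional calculus. -/
noncomputable def mpow {n : Type*} [Fintype n] [DecidableEq n]
    (A : Matrix n n ℂ) (p : ℝ) : Matrix n n ℂ :=
  cfc (fun x : ℝ => x ^ p) A

/-- The Loewner order on matrices. -/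
def LoewnerLE {n : Type*} [Fintype n] (A B : Matrix n n ℂ) : Prop :=
  (B - A).PosSemidef

/-- The matrix geometric mean `A # B = A^{1/2}(A^{-1/2} B A^{-1/2})^{1/2} A^{1/2}`. -/
noncomputable def geo {n : Type*} [Fintype n] [DecidableEq n]
    (A B : Matrix n n ℂ) : Matrix n n ℂ :=
  mpow A (1/2) * mpow (mpow A (-(1/2)) * B * mpow A (-(1/2))) (1/2) * mpow A (1/2)

/-- The generalized Kantorovich constant. -/
noncomputable def Kconst (h p : ℝ) : ℝ :=
  ((h ^ p - h) / ((p - 1) * (h - 1))) *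
    (((p - 1) / p) * ((h ^ p - 1) / (h ^ p - h))) ^ p

/-- The Specht ratio. -/
noncomputable def Specht (h : ℝ) : ℝ :=
  if h = 1 then 1 else (h - 1) * h ^ (1 / (h - 1)) / (Real.exp 1 * Real.log h)

namespace HM
open Matrix Polynomial
variable {n m : Type*} [Fintype n] [DecidableEq n] [Fintype m] [DecidableEq m]

lemma cont (f : ℝ → ℝ) (X : Matrix n n ℂ) : ContinuousOn f (spectrum ℝ X) :=
  (Matrix.finite_real_spectrum (A := X)).continuousOn f

lemma interp (f : ℝ → ℝ) {s : Set ℝ} (hs : s.Finite) :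
    ∃ p : ℝ[X], s.EqOn f (fun x => p.eval x) := by
  refine ⟨Lagrange.interpolate hs.toFinset id f, fun x hx => ?_⟩
  exact (Lagrange.eval_interpolate_at_node (v := id) f (fun _ _ _ _ h => h) (hs.mem_toFinset.2 hx)).symm

lemma cfc_map (φ : Matrix n n ℂ →ₐ[ℝ] Matrix m m ℂ) (f : ℝ → ℝ) {X : Matrix n n ℂ}
    (hX : X.IsHermitian) (hY : (φ X).IsHermitian) : cfc f (φ X) = φ (cfc f X) := by
  obtain ⟨p, hp⟩ := interp f (Matrix.finite_real_spectrum (A := X))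
  have h2 := hp.mono (AlgHom.spectrum_apply_subset φ X)
  rw [cfc_congr hp, cfc_congr h2, cfc_polynomial p X hX.isSelfAdjoint, cfc_polynomial p _ hY.isSelfAdjoint,
    Polynomial.aeval_algHom_apply]

/-- block diagonal as an algebra hom -/
def bd : (Matrix n n ℂ × Matrix m m ℂ) →ₐ[ℝ] Matrix (n ⊕ m) (n ⊕ m) ℂ where
  toFun P := fromBlocks P.1 0 0 P.2
  map_one' := by simp
  map_zero' := by simp
  map_mul' := by intro a b; simp [fromBlocks_multiply]
  map_add' := by intro a b; simp [fromBlocks_add]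
  commutes' := by
    intro r
    ext i j
    rcases i with i | i <;> rcases j with j | j <;> 
      simp [Algebra.algebraMap_eq_smul_one, Matrix.one_apply, Matrix.smul_apply]

lemma cfc_bd (f : ℝ → ℝ) {X : Matrix n n ℂ} {Y : Matrix m m ℂ}
    (hX : X.IsHermitian) (hY : Y.IsHermitian) :
    cfc f (fromBlocks X 0 0 Y) = fromBlocks (cfc f X) 0 0 (cfc f Y) := by
  obtain ⟨p, hp⟩ := interp f ((Matrix.finite_real_spectrum (A := X)).union
    (Matrix.finite_real_spectrum (A := Y)))
  have hH : (fromBlocks X 0 0 Y).IsHermitian := IsHermitian.fromBlocks hX (by simp) hY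
  have h1 : spectrum ℝ (fromBlocks X 0 0 Y) ⊆ spectrum ℝ X ∪ spectrum ℝ Y := by
    rw [← Prod.spectrum_eq]
    exact AlgHom.spectrum_apply_subset bd (X, Y)
  rw [cfc_congr (hp.mono h1), cfc_congr (hp.mono Set.subset_union_left),
    cfc_congr (hp.mono Set.subset_union_right), cfc_polynomial p X hX.isSelfAdjoint, cfc_polynomial p _ hY.isSelfAdjoint,
    cfc_polynomial p _ hH.isSelfAdjoint]
  have h3 := Polynomial.aeval_algHom_apply (bd (n := n) (m := m)) (X, Y) p
  have h4 : aeval (X, Y) p = (aeval X p, aeval Y p) := by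
    ext1
    · exact (Polynomial.aeval_algHom_apply (AlgHom.fst ℝ (Matrix n n ℂ) (Matrix m m ℂ)) (X, Y) p).symm
    · exact (Polynomial.aeval_algHom_apply (AlgHom.snd ℝ (Matrix n n ℂ) (Matrix m m ℂ)) (X, Y) p).symm
  rw [h4] at h3
  exact h3

lemma cfc_psd (f : ℝ → ℝ) {X : Matrix n n ℂ} (hX : X.IsHermitian)
    (hf : ∀ i, 0 ≤ f (hX.eigenvalues i)) : (cfc f X).PosSemidef := by
  rw [hX.cfc_eq, IsHermitian.cfc, Unitary.conjStarAlgAut_apply]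
  apply PosSemidef.mul_mul_conjTranspose_same
  rw [posSemidef_diagonal_iff]
  intro i
  simpa using hf i

lemma mem_spec {X : Matrix n n ℂ} (hX : X.IsHermitian) {x : ℝ} (hx : x ∈ spectrum ℝ X) :
    ∃ i, hX.eigenvalues i = x := by
  rwa [hX.spectrum_real_eq_range_eigenvalues] at hx

lemma spec_pos {X : Matrix n n ℂ} (hX : X.PosDef) {x : ℝ} (hx : x ∈ spectrum ℝ X) : 0 < x := by
  obtain ⟨i, rfl⟩ := mem_spec hX.isHermitian hx
  exact hX.eigenvalues_pos i

lemma cfc_mul_inv (f : ℝ → ℝ) {X : Matrix n n ℂ} (hX : X.IsHermitian)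
    (hf : ∀ x ∈ spectrum ℝ X, f x ≠ 0) : cfc f X * cfc (fun x => (f x)⁻¹) X = 1 := by
  rw [← cfc_mul f (fun x => (f x)⁻¹) X (cont _ _) (cont _ _), ← cfc_const_one ℝ X hX.isSelfAdjoint]
  exact cfc_congr fun x hx => mul_inv_cancel₀ (hf x hx)

lemma cfc_inv (f : ℝ → ℝ) {X : Matrix n n ℂ} (hX : X.IsHermitian)
    (hf : ∀ x ∈ spectrum ℝ X, f x ≠ 0) : (cfc f X)⁻¹ = cfc (fun x => (f x)⁻¹) X :=
  Matrix.inv_eq_right_inv (cfc_mul_inv f hX hf)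

lemma cfc_pd (f : ℝ → ℝ) {X : Matrix n n ℂ} (hX : X.PosDef)
    (hf : ∀ x, 0 < x → 0 < f x) : (cfc f X).PosDef := by
  rw [(cfc_psd f hX.isHermitian fun i => (hf _ (hX.eigenvalues_pos i)).le).posDef_iff_isUnit]
  have := cfc_mul_inv f hX.isHermitian (fun x hx => (hf x (spec_pos hX hx)).ne')
  exact IsUnit.of_mul_eq_one _ this

lemma cfc_g (h : ℝ → ℝ) (hp : ∀ x, 0 < x → 0 < h x) {X : Matrix n n ℂ} (hX : X.PosDef) :
    cfc (fun x => (h x⁻¹)⁻¹) X = (cfc h X⁻¹)⁻¹ := by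
  have h1 : X⁻¹ = cfc (fun x : ℝ => x⁻¹) X := by
    conv_lhs => rw [← cfc_id' ℝ X hX.isHermitian.isSelfAdjoint]
    exact cfc_inv _ hX.isHermitian fun x hx => (spec_pos hX hx).ne'
  have h2 : cfc h X⁻¹ = cfc (fun x => h x⁻¹) X := by
    rw [h1, ← cfc_comp' h (fun x : ℝ => x⁻¹) X
      (((Matrix.finite_real_spectrum (A := X)).image _).continuousOn h) (cont _ _) hX.isHermitian.isSelfAdjoint]
  rw [h2]
  exact (cfc_inv _ hX.isHermitian fun x hx => (hp _ (inv_pos.2 (spec_pos hX hx))).ne').symm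

lemma le_inv {X Y : Matrix n n ℂ} (hX : X.PosDef) (hY : Y.PosDef) (h : LoewnerLE X Y) :
    LoewnerLE Y⁻¹ X⁻¹ := by
  have : Invertible Y := hY.isUnit.invertible
  have : Invertible X⁻¹ := hX.inv.isUnit.invertible
  have h1 := PosDef.fromBlocks₁₁ (1 : Matrix n n ℂ) X⁻¹ hY
  have h2 := PosDef.fromBlocks₂₂ Y (1 : Matrix n n ℂ) hX.inv
  unfold LoewnerLE at *
  have : Invertible X := hX.isUnit.invertible
  simp at h1 h2
  exact h1.1 (h2.2 h)

/-- monotone for all index types -/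
def Mono (g : ℝ → ℝ) : Prop := ∀ (m : ℕ) (A B : Matrix (Fin m) (Fin m) ℂ),
      A.PosDef → B.PosDef → LoewnerLE A B → LoewnerLE (cfc g A) (cfc g B)

lemma mono_g (h : ℝ → ℝ) (hp : ∀ x, 0 < x → 0 < h x) (hm : Mono h) :
    Mono (fun x => (h x⁻¹)⁻¹) := by
  intro m A B hA hB hAB
  rw [cfc_g h hp hA, cfc_g h hp hB]
  exact le_inv (cfc_pd h hB.inv hp) (cfc_pd h hA.inv hp) (hm m _ _ hB.inv hA.inv (le_inv hA hB hAB))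

lemma mono_gen (g : ℝ → ℝ) (hm : Mono g) {A B : Matrix n n ℂ} (hA : A.PosDef) (hB : B.PosDef)
    (hAB : LoewnerLE A B) : LoewnerLE (cfc g A) (cfc g B) := by
  let e := Fintype.equivFin n
  let φ := (Matrix.reindexAlgEquiv ℝ ℂ e).toAlgHom
  have pd : ∀ {A : Matrix n n ℂ}, A.PosDef → (φ A).PosDef := fun h => h.submatrix e.symm.injective
  have key := hm _ (φ A) (φ B) (pd hA) (pd hB) (by
    unfold LoewnerLE; rw [← map_sub]; exact PosSemidef.submatrix hAB _)
  rw [cfc_map φ g hA.isHermitian (pd hA).isHermitian, cfc_map φ g hB.isHermitian (pd hB).isHermitian] at key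
  unfold LoewnerLE at *
  rw [← map_sub] at key
  exact (posSemidef_submatrix_equiv e.symm).1 key

lemma exists_bound {M : Matrix n n ℂ} (hM : M.IsHermitian) :
    ∃ l : ℝ, 0 < l ∧ (l • (1 : Matrix n n ℂ) - M).PosSemidef := by
  refine ⟨1 + ∑ i, |hM.eigenvalues i|, by positivity, ?_⟩
  have : ((1 + ∑ i, |hM.eigenvalues i|) • (1 : Matrix n n ℂ) - M) =
      cfc (fun x => (1 + ∑ i, |hM.eigenvalues i|) - x) M := by
    rw [cfc_sub _ _ M (cont _ _) (cont _ _), cfc_const _ M hM.isSelfAdjoint, cfc_id' ℝ M hM.isSelfAdjoint,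
      Algebra.algebraMap_eq_smul_one]
  rw [this]
  apply cfc_psd _ hM
  intro i
  have := Finset.single_le_sum (f := fun i => |hM.eigenvalues i|) (fun i _ => abs_nonneg _) (Finset.mem_univ i)
  have := le_abs_self (hM.eigenvalues i)

  linarith


/-- conjugation hom -/
def conjHom (V : Matrix n n ℂ) (hV : Vᴴ * V = 1) (hV' : V * Vᴴ = 1) :
    Matrix n n ℂ →ₐ[ℝ] Matrix n n ℂ where
  toFun T := Vᴴ * T * V
  map_one' := by simp [hV]
  map_zero' := by simp
  map_mul' := by
    intro x y
    calc Vᴴ * (x * y) * V = Vᴴ * x * 1 * y * V := by simp [Matrix.mul_assoc]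
      _ = _ := by rw [← hV']; simp only [Matrix.mul_assoc]
  map_add' := by intro a b; simp [Matrix.mul_add, Matrix.add_mul]
  commutes' := by
    intro r
    simp [Algebra.algebraMap_eq_smul_one, hV]

/-- rotation -/
noncomputable def rot (n : Type*) [DecidableEq n] (a b : ℝ) : Matrix (n ⊕ n) (n ⊕ n) ℂ :=
  fromBlocks (a • 1) (-(b • 1)) (b • 1) (a • 1)

lemma rot_conj (a b : ℝ) (X Y : Matrix n n ℂ) :
    (rot n a b)ᴴ * fromBlocks X 0 0 Y * rot n a b =
      fromBlocks ((a * a) • X + (b * b) • Y) ((a * b) • (Y - X)) ((a * b) • (Y - X))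
        ((b * b) • X + (a * a) • Y) := by
  simp only [rot, fromBlocks_conjTranspose, fromBlocks_multiply, conjTranspose_smul,
    conjTranspose_neg, conjTranspose_one, star_trivial]
  congr 1 <;> simp <;> module

lemma rot1 {a b : ℝ} (h : a * a + b * b = 1) : (rot n a b)ᴴ * rot n a b = 1 := by
  have := rot_conj a b (1 : Matrix n n ℂ) 1
  rw [fromBlocks_one, Matrix.mul_one] at this
  rw [this, ← fromBlocks_one]
  congr 1
  · rw [← add_smul, h, one_smul]
  · simp
  · simp
  · rw [← add_smul, add_comm, h, one_smul]

lemma rsmul_pd {X : Matrix n n ℂ} (hX : X.PosDef) {r : ℝ} (hr : 0 < r) : (r • X).PosDef := hX.smul hr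
lemma rsmul_psd {X : Matrix n n ℂ} (hX : X.PosSemidef) {r : ℝ} (hr : 0 ≤ r) :
    (r • X).PosSemidef := hX.smul hr

lemma comb_pd {X Y : Matrix n n ℂ} (hX : X.PosDef) (hY : Y.PosDef) {t : ℝ} (h0 : 0 ≤ t)
    (h1 : t ≤ 1) : ((1 - t) • X + t • Y).PosDef := by
  rcases h0.eq_or_lt with rfl | h0
  · simpa using hX
  · exact PosDef.posSemidef_add (rsmul_psd hX.posSemidef (by linarith)) (rsmul_pd hY h0)

lemma bd_pd {X : Matrix n n ℂ} {Y : Matrix m m ℂ} (hX : X.PosDef) (hY : Y.PosDef) :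
    (fromBlocks X 0 0 Y).PosDef := by
  have : Invertible X := hX.isUnit.invertible
  have h := PosDef.fromBlocks₁₁ (0 : Matrix n m ℂ) Y hX
  simp only [conjTranspose_zero, Matrix.mul_zero, sub_zero] at h
  rw [(h.2 hY.posSemidef).posDef_iff_isUnit]
  exact (isUnit_fromBlocks_zero₂₁).2 ⟨hX.isUnit, hY.isUnit⟩

lemma blk_sub (A B C D A' B' C' D' : Matrix n n ℂ) :
    fromBlocks A B C D - fromBlocks A' B' C' D' =
      fromBlocks (A - A') (B - B') (C - C') (D - D') := by
  ext i j
  rcases i with i | i <;> rcases j with j | j <;> rfl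

lemma main1 (g : ℝ → ℝ) (hm : Mono g) {X Y : Matrix n n ℂ} (hX : X.PosDef) (hY : Y.PosDef)
    {t : ℝ} (h0 : 0 ≤ t) (h1 : t ≤ 1) {r : ℝ} (hr : 1 < r) :
    LoewnerLE ((1 - t) • cfc g X + t • cfc g Y) (cfc g (r • ((1 - t) • X + t • Y))) := by
  obtain ⟨a, ha⟩ : ∃ a : ℝ, a * a = 1 - t := ⟨√(1 - t), Real.mul_self_sqrt (by linarith)⟩
  obtain ⟨b, hb⟩ : ∃ b : ℝ, b * b = t := ⟨√t, Real.mul_self_sqrt h0⟩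
  have hV : (rot n a b)ᴴ * rot n a b = 1 := rot1 (by linarith)
  have hV' := _root_.mul_eq_one_comm.1 hV
  let φ := conjHom (rot n a b) hV hV'
  have hφ : ∀ X Y : Matrix n n ℂ, φ (fromBlocks X 0 0 Y) =
      fromBlocks ((1 - t) • X + t • Y) ((a * b) • (Y - X)) ((a * b) • (Y - X))
        (t • X + (1 - t) • Y) := by
    intro X Y
    rw [← ha, ← hb]; exact rot_conj a b X Y
  have hT := bd_pd hX hY
  have hφT : (φ (fromBlocks X 0 0 Y)).PosDef :=
    hT.conjTranspose_mul_mul_same (mulVec_injective_of_isUnit (IsUnit.of_mul_eq_one _ hV'))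
  set C := (1 - t) • X + t • Y with hC
  have hCpd : C.PosDef := comb_pd hX hY h0 h1
  set D := (a * b) • (Y - X) with hD
  set E := t • X + (1 - t) • Y with hE
  have hDh : Dᴴ = D := by
    rw [hD, conjTranspose_smul, conjTranspose_sub, hX.isHermitian.eq, hY.isHermitian.eq, star_trivial]
  have hEh : E.IsHermitian := by
    have := hφT.isHermitian
    rw [hφ] at this
    exact (isHermitian_fromBlocks_iff.1 this).2.2.2
  have hC' : ((r - 1) • C).PosDef := rsmul_pd hCpd (by linarith)
  have hM : (E + (-D)ᴴ * ((r - 1) • C)⁻¹ * (-D)).IsHermitian :=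
    hEh.add (isHermitian_conjTranspose_mul_mul _ hC'.inv.isHermitian)
  obtain ⟨l, hl, hlM⟩ := exists_bound hM
  have hP : (r • C).PosDef := rsmul_pd hCpd (by linarith)
  have hL : (l • (1 : Matrix n n ℂ)).PosDef := rsmul_pd PosDef.one hl
  have hle : LoewnerLE (φ (fromBlocks X 0 0 Y)) (fromBlocks (r • C) 0 0 (l • 1)) := by
    unfold LoewnerLE
    have : Invertible ((r - 1) • C) := hC'.isUnit.invertible
    rw [← sub_sub] at hlM
    have h3 := (PosDef.fromBlocks₁₁ (-D) (l • 1 - E) hC').2 hlM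
    have h4 : fromBlocks (r • C) 0 0 (l • 1) - φ (fromBlocks X 0 0 Y) =
        fromBlocks ((r - 1) • C) (-D) (-D)ᴴ (l • 1 - E) := by
      rw [hφ, blk_sub, ← hC, ← hD, ← hE, conjTranspose_neg, hDh, zero_sub, sub_smul r 1 C, one_smul]
    rw [h4]
    exact h3
  have key := mono_gen g hm hφT (bd_pd hP hL) hle
  rw [cfc_map φ g hT.isHermitian hφT.isHermitian, cfc_bd g hX.isHermitian hY.isHermitian,
    cfc_bd g hP.isHermitian hL.isHermitian, hφ] at key
  unfold LoewnerLE at key ⊢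
  rw [blk_sub] at key
  exact key.submatrix Sum.inl

lemma scal_pd {x : ℝ} (hx : 0 < x) : (algebraMap ℝ (Matrix (Fin 1) (Fin 1) ℂ) x).PosDef := by
  rw [Algebra.algebraMap_eq_smul_one]
  exact rsmul_pd PosDef.one hx

lemma scalar1 (g : ℝ → ℝ) (hm : Mono g) {x y : ℝ} (hX : 0 < x) (hY : 0 < y)
    {t : ℝ} (h0 : 0 ≤ t) (h1 : t ≤ 1) {r : ℝ} (hr : 1 < r) :
    (1 - t) * g x + t * g y ≤ g (r * ((1 - t) * x + t * y)) := by
  have := main1 g hm (scal_pd hX) (scal_pd hY) h0 h1 hr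
  simp only [Algebra.smul_def, ← map_mul, ← map_add, cfc_algebraMap, LoewnerLE, ← map_sub] at this
  have h2 := this.diag_nonneg (i := 0)
  rw [Algebra.algebraMap_eq_smul_one] at h2
  simp only [Matrix.smul_apply, Matrix.one_apply_eq, Complex.real_smul, mul_one] at h2
  have := Complex.zero_le_real.1 h2
  linarith

lemma scalar2 (g : ℝ → ℝ) (hp : ∀ x, 0 < x → 0 < g x) (hm : Mono g) {x : ℝ} (hx : 0 < x)
    {r : ℝ} (hr : 1 < r) : g (r * x) ≤ r ^ 3 * g x := by
  have hr0 : 0 < r := by linarith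
  have hr3 : 1 < r ^ 3 := one_lt_pow₀ hr (by norm_num)
  have ht1 : (r ^ 3)⁻¹ < 1 := inv_lt_one_of_one_lt₀ hr3
  have hd : 0 < (r⁻¹ - (r⁻¹) ^ 2) * x / (1 - (r ^ 3)⁻¹) := by
    have h1 : r⁻¹ < 1 := inv_lt_one_of_one_lt₀ hr
    have h2 : 0 < r⁻¹ := by positivity
    apply div_pos (mul_pos (by nlinarith) hx) (by linarith)
  have := scalar1 g hm hd (mul_pos hr0 hx) (t := (r ^ 3)⁻¹) (by positivity) ht1.le hr
  rw [mul_div_cancel₀ _ (by linarith : (1 - (r ^ 3)⁻¹) ≠ 0)] at this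
  have e : r * ((r⁻¹ - (r⁻¹) ^ 2) * x + (r ^ 3)⁻¹ * (r * x)) = x := by
    field_simp; ring
  rw [e] at this
  have h5 := mul_pos (by linarith : 0 < 1 - (r ^ 3)⁻¹) (hp _ hd)
  have h6 : (r ^ 3)⁻¹ * g (r * x) ≤ g x := by linarith
  rwa [inv_mul_le_iff₀ (by positivity)] at h6

lemma main2 (g : ℝ → ℝ) (hp : ∀ x, 0 < x → 0 < g x) (hm : Mono g) {C : Matrix n n ℂ}
    (hC : C.PosDef) {r : ℝ} (hr : 1 < r) : LoewnerLE (cfc g (r • C)) (r ^ 3 • cfc g C) := by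
  have hCs := hC.isHermitian.isSelfAdjoint
  have h1 : cfc g (r • C) = cfc (fun x => g (r * x)) C := by
    have h3 : r • C = cfc (fun x : ℝ => r * x) C := by
      rw [cfc_const_mul r (fun x => x) C (cont _ _), cfc_id' ℝ C hCs]
    rw [h3, ← cfc_comp' g (fun x : ℝ => r * x) C
      (((Matrix.finite_real_spectrum (A := C)).image _).continuousOn g) (cont _ _) hCs]
  unfold LoewnerLE
  rw [h1, ← cfc_const_mul (r ^ 3) g C (cont _ _), ← cfc_sub _ _ C (cont _ _) (cont _ _)]
  apply cfc_psd _ hC.isHermitian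
  intro i
  have := scalar2 g hp hm (hC.eigenvalues_pos i) hr
  linarith

lemma concave (g : ℝ → ℝ) (hp : ∀ x, 0 < x → 0 < g x) (hm : Mono g) {X Y : Matrix n n ℂ}
    (hX : X.PosDef) (hY : Y.PosDef) {t : ℝ} (h0 : 0 ≤ t) (h1 : t ≤ 1) :
    LoewnerLE ((1 - t) • cfc g X + t • cfc g Y) (cfc g ((1 - t) • X + t • Y)) := by
  set C := (1 - t) • X + t • Y with hC
  have hCpd : C.PosDef := comb_pd hX hY h0 h1
  set M := (1 - t) • cfc g X + t • cfc g Y with hM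
  have key : ∀ r : ℝ, 1 < r → (r ^ 3 • cfc g C - M).PosSemidef := by
    intro r hr
    have := PosSemidef.add (main2 g hp hm hCpd hr) (main1 g hm hX hY h0 h1 hr)
    rwa [sub_add_sub_cancel] at this
  have hMh : M.IsHermitian := (comb_pd (cfc_pd g hX hp) (cfc_pd g hY hp) h0 h1).isHermitian
  apply PosSemidef.of_dotProduct_mulVec_nonneg
  · exact (cfc_pd g hCpd hp).isHermitian.sub hMh
  intro x
  have hcl : IsClosed {r : ℝ | 0 ≤ star x ⬝ᵥ ((r ^ 3 • cfc g C - M) *ᵥ x)} := by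
    apply isClosed_le continuous_const
    simp only [sub_mulVec, smul_mulVec, dotProduct_sub, dotProduct_smul]
    fun_prop
  have hsub : Set.Ioi (1 : ℝ) ⊆ {r : ℝ | 0 ≤ star x ⬝ᵥ ((r ^ 3 • cfc g C - M) *ᵥ x)} :=
    fun r hr => (key r hr).dotProduct_mulVec_nonneg x
  have h2 : (1 : ℝ) ∈ closure (Set.Ioi (1 : ℝ)) := by rw [closure_Ioi]; exact Set.self_mem_Ici
  have h3 := closure_minimal hsub hcl h2
  simpa using h3

end HM

theorem opMonotone_harmonic_mean (h : ℝ → ℝ)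
    (hh_pos : ∀ x : ℝ, 0 < x → 0 < h x)
    (hh_mono : ∀ (m : ℕ) (A B : Matrix (Fin m) (Fin m) ℂ),
      A.PosDef → B.PosDef → LoewnerLE A B → LoewnerLE (cfc h A) (cfc h B))
    (n : ℕ) (A B : Matrix (Fin n) (Fin n) ℂ) (hA : A.PosDef) (hB : B.PosDef)
    (t : ℝ) (ht0 : 0 ≤ t) (ht1 : t ≤ 1) :
    LoewnerLE (cfc h (((1 - t) • A⁻¹ + t • B⁻¹)⁻¹))
      (((1 - t) • (cfc h A)⁻¹ + t • (cfc h B)⁻¹)⁻¹) := by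
  have hgp : ∀ x : ℝ, 0 < x → 0 < (h x⁻¹)⁻¹ := fun x hx => inv_pos.2 (hh_pos _ (inv_pos.2 hx))
  have hC := HM.comb_pd hA.inv hB.inv ht0 ht1
  have hcA := HM.cfc_pd h hA hh_pos
  have hcB := HM.cfc_pd h hB hh_pos
  have key := HM.concave _ hgp (HM.mono_g h hh_pos hh_mono) hA.inv hB.inv ht0 ht1
  rw [HM.cfc_g h hh_pos hA.inv, HM.cfc_g h hh_pos hB.inv, HM.cfc_g h hh_pos hC,
    Matrix.nonsing_inv_nonsing_inv A ((Matrix.isUnit_iff_isUnit_det A).1 hA.isUnit),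
    Matrix.nonsing_inv_nonsing_inv B ((Matrix.isUnit_iff_isUnit_det B).1 hB.isUnit)] at key
  have hcC := HM.cfc_pd h hC.inv hh_pos
  have := HM.le_inv (HM.comb_pd hcA.inv hcB.inv ht0 ht1) hcC.inv key
  rwa [Matrix.nonsing_inv_nonsing_inv _ ((Matrix.isUnit_iff_isUnit_det _).1 hcC.isUnit)] at this
end

section
/- For p, q ∈ [-1,0] the map (A,B) ↦ A^p ⊗ B^q on positive definite matrices is jointly log-convex: (A₁∇A₂)^p ⊗ (B₁∇B₂)^q ≤ (A₁^p ⊗ B₁^q) # (A₂^p ⊗ B₂^q), where ∇ is the arithmetic mean and # the matrix geometric mean. -/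
open scoped ComplexOrder Kronecker

section Aux
open scoped MatrixOrder Matrix.Norms.L2Operator
variable {n : Type*} [Fintype n] [DecidableEq n]

noncomputable local instance matCStar : CStarAlgebra (Matrix n n ℂ) where

lemma aux_mpow_eq {A : Matrix n n ℂ} (hA : 0 ≤ A) (p : ℝ) : mpow A p = A ^ p := by
  rw [mpow, CFC.rpow_eq_cfc_real hA]

lemma aux_conj {X Y C : Matrix n n ℂ} (hC : 0 ≤ C) (h : X ≤ Y) : C * X * C ≤ C * Y * C :=
  (IsSelfAdjoint.of_nonneg hC).conjugate_le_conjugate h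

lemma aux_geo {X Y T Xi : Matrix n n ℂ} (hX : X.PosDef) (hT : 0 ≤ T)
    (hXi : Xi * X = 1) (h : T * Xi * T ≤ Y) : T ≤ geo X Y := by
  have hs : IsStrictlyPositive X := Matrix.isStrictlyPositive_iff_posDef.mpr hX
  have hu : IsUnit X := hs.isUnit
  have h0 : 0 ≤ X := hs.nonneg
  have hY : 0 ≤ Y := by
    refine le_trans ?_ h
    have : Xi = X ^ (-1 : ℝ) := by
      have h1 := CFC.rpow_mul_rpow_neg (a := X) 1 hs
      rw [CFC.rpow_one X h0] at h1
      calc Xi = Xi * (X * X ^ (-1 : ℝ)) := by rw [h1, mul_one]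
        _ = _ := by rw [← mul_assoc, hXi, one_mul]
    have h2 := aux_conj hT (CFC.rpow_nonneg (a := X) (y := -1))
    rw [this]
    simpa using h2
  set R := X ^ (-(1/2) : ℝ) with hR
  set S := X ^ (1/2 : ℝ) with hS
  have hR0 : 0 ≤ R := CFC.rpow_nonneg
  have hS0 : 0 ≤ S := CFC.rpow_nonneg
  have hSR : S * R = 1 := CFC.rpow_mul_rpow_neg _ hs
  have hRS : R * S = 1 := CFC.rpow_neg_mul_rpow _ hs
  have hSS : S * S = X := by
    rw [hS, ← CFC.rpow_add hu]; norm_num; exact CFC.rpow_one X h0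
  have hRR : R * R = Xi := by
    calc R * R = (Xi * X) * (R * R) := by rw [hXi, one_mul]
      _ = Xi * (S * (S * R) * R) := by rw [← hSS]; noncomm_ring
      _ = Xi := by rw [hSR, mul_one, hSR, mul_one]
  have hM : 0 ≤ R * Y * R := by simpa using aux_conj hR0 hY
  have hN : 0 ≤ R * T * R := by simpa using aux_conj hR0 hT
  have hgeo : geo X Y = S * CFC.sqrt (R * Y * R) * S := by
    rw [geo, aux_mpow_eq h0, aux_mpow_eq h0, aux_mpow_eq hM, CFC.sqrt_eq_rpow]
  have key : R * T * R ≤ CFC.sqrt (R * Y * R) := by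
    rw [← CFC.sqrt_mul_self (R * T * R) hN]
    apply CFC.sqrt_le_sqrt
    have := aux_conj hR0 h
    rw [← hRR] at this
    convert this using 1
    noncomm_ring
  rw [hgeo]
  have := aux_conj hS0 key
  convert this using 1
  calc T = (S * R) * T * (R * S) := by rw [hSR, hRS]; simp
    _ = _ := by noncomm_ring

/-- The harmonic mean `((X + Y)/2)⁻¹` satisfies `T X T ≤ Y⁻¹`. -/
lemma aux_harm {X Y T Yi : Matrix n n ℂ} (hX : 0 ≤ X) (hT : 0 ≤ T) (hYi0 : 0 ≤ Yi)
    (hYi : Yi * Y = 1) (hYi' : Y * Yi = 1)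
    (hTM : T * ((1/2 : ℝ) • (X + Y)) = 1) (hMT : ((1/2 : ℝ) • (X + Y)) * T = 1)
    (hY : 0 ≤ Y) : T * X * T ≤ Yi := by
  set M := (1/2 : ℝ) • (X + Y) with hM
  have hsa : IsSelfAdjoint (X - Y) := (IsSelfAdjoint.of_nonneg hX).sub (IsSelfAdjoint.of_nonneg hY)
  have h1 : 0 ≤ (X - Y) * Yi * (X - Y) := by
    simpa using hsa.conjugate_le_conjugate hYi0
  have h2 : M * Yi * M - X = (1/4 : ℝ) • ((X - Y) * Yi * (X - Y)) := by
    have e1 : (X + Y) * Yi * (X + Y) = X * Yi * X + X * (Yi * Y) + (Y * Yi) * X + (Y * Yi) * Y := by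
      noncomm_ring
    have e2 : (X - Y) * Yi * (X - Y) = X * Yi * X - X * (Yi * Y) - (Y * Yi) * X + (Y * Yi) * Y := by
      noncomm_ring
    rw [e2, hM]
    simp only [smul_mul_assoc, mul_smul_comm, e1, hYi, hYi', mul_one, one_mul]
    module
  have h3 : X ≤ M * Yi * M := by
    rw [← sub_nonneg, h2]
    exact smul_nonneg (by norm_num) h1
  have := aux_conj hT h3
  refine this.trans_eq ?_
  calc T * (M * Yi * M) * T = (T * M) * Yi * (M * T) := by noncomm_ring
    _ = Yi := by rw [hTM, hMT]; simp

lemma aux_main {p : ℝ} (hp : p ∈ Set.Icc (-1 : ℝ) 0) {A₁ A₂ : Matrix n n ℂ}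
    (hA₁ : A₁.PosDef) (hA₂ : A₂.PosDef) :
    ∃ T : Matrix n n ℂ, 0 ≤ mpow ((1/2 : ℝ) • (A₁ + A₂)) p ∧
      mpow ((1/2 : ℝ) • (A₁ + A₂)) p ≤ T ∧ T * (mpow A₁ (-p)) * T ≤ mpow A₂ p := by
  have s1 : IsStrictlyPositive A₁ := Matrix.isStrictlyPositive_iff_posDef.mpr hA₁
  have s2 : IsStrictlyPositive A₂ := Matrix.isStrictlyPositive_iff_posDef.mpr hA₂
  have s3 : IsStrictlyPositive ((1/2 : ℝ) • (A₁ + A₂)) :=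
    Matrix.isStrictlyPositive_iff_posDef.mpr ((hA₁.add hA₂).smul (by norm_num : (0:ℝ) < 1/2))
  rw [aux_mpow_eq s3.nonneg, aux_mpow_eq s1.nonneg, aux_mpow_eq s2.nonneg]
  have hX : IsStrictlyPositive (A₁ ^ (-p)) := s1.rpow _ _
  have hY : IsStrictlyPositive (A₂ ^ (-p)) := s2.rpow _ _
  have hM : IsStrictlyPositive ((1/2 : ℝ) • (A₁ ^ (-p) + A₂ ^ (-p))) :=
    Matrix.isStrictlyPositive_iff_posDef.mpr
      (((Matrix.isStrictlyPositive_iff_posDef.mp hX).add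
        (Matrix.isStrictlyPositive_iff_posDef.mp hY)).smul (by norm_num : (0:ℝ) < 1/2))
  have hconc : (1/2 : ℝ) • (A₁ ^ (-p) + A₂ ^ (-p)) ≤ ((1/2 : ℝ) • (A₁ + A₂)) ^ (-p) := by
    have hc := CFC.concaveOn_rpow (A := Matrix n n ℂ) (p := -p)
      ⟨by linarith [hp.2], by linarith [hp.1]⟩
    have := hc.2 (Set.mem_Ici.mpr s1.nonneg) (Set.mem_Ici.mpr s2.nonneg)
      (by norm_num : (0 : ℝ) ≤ 1/2) (by norm_num : (0 : ℝ) ≤ 1/2) (by norm_num)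
    simpa only [smul_add] using this
  set M := (1/2 : ℝ) • (A₁ ^ (-p) + A₂ ^ (-p)) with hMdef
  have c1 := CFC.rpow_mul_rpow_neg 1 hM
  have c2 := CFC.rpow_neg_mul_rpow 1 hM
  rw [CFC.rpow_one M hM.nonneg] at c1 c2
  have d1 := CFC.rpow_mul_rpow_neg p s2
  have d2 := CFC.rpow_neg_mul_rpow p s2
  refine ⟨M ^ (-1 : ℝ), CFC.rpow_nonneg, ?_, ?_⟩
  · have hZ : IsStrictlyPositive (((1/2 : ℝ) • (A₁ + A₂)) ^ (-p)) := s3.rpow _ _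
    have e1 := CFC.rpow_mul_rpow_neg p s3
    have e2 := CFC.rpow_neg_mul_rpow p s3
    let a : (Matrix n n ℂ)ˣ := ⟨M, M ^ (-1 : ℝ), c1, c2⟩
    let b : (Matrix n n ℂ)ˣ := ⟨_, _, e2, e1⟩
    exact CStarAlgebra.inv_le_inv (a := a) (b := b) hM.nonneg hconc
  · exact aux_harm hX.nonneg CFC.rpow_nonneg CFC.rpow_nonneg d1 d2 c2 c1 hY.nonneg

lemma aux_kron {m : Type*} [Fintype m] [DecidableEq m] {A A' : Matrix n n ℂ} {B B' : Matrix m m ℂ}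
    (hA : 0 ≤ A) (hAA : A ≤ A') (hB : 0 ≤ B) (hBB : B ≤ B') : A ⊗ₖ B ≤ A' ⊗ₖ B' := by
  rw [Matrix.le_iff] at *
  have h0 : (A' - 0).PosSemidef := by
    have := hA.add hAA; simpa using this
  rw [sub_zero] at *
  have e : A' ⊗ₖ B' - A ⊗ₖ B = A' ⊗ₖ (B' - B) + (A' - A) ⊗ₖ B := by
    ext ⟨i, j⟩ ⟨i', j'⟩
    simp [Matrix.kroneckerMap_apply]
    ring
  rw [e]
  exact (h0.kronecker hBB).add (hAA.kronecker hB)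

lemma aux_final {k m : Type*} [Fintype k] [DecidableEq k]
    [Fintype m] [DecidableEq m] (p q : ℝ) (hp : p ∈ Set.Icc (-1 : ℝ) 0)
    (hq : q ∈ Set.Icc (-1 : ℝ) 0)
    (A₁ A₂ : Matrix k k ℂ) (B₁ B₂ : Matrix m m ℂ)
    (hA₁ : A₁.PosDef) (hA₂ : A₂.PosDef) (hB₁ : B₁.PosDef) (hB₂ : B₂.PosDef) :
    LoewnerLE
      (mpow ((1/2 : ℝ) • (A₁ + A₂)) p ⊗ₖ mpow ((1/2 : ℝ) • (B₁ + B₂)) q)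
      (geo (mpow A₁ p ⊗ₖ mpow B₁ q) (mpow A₂ p ⊗ₖ mpow B₂ q)) := by
  obtain ⟨T, hT0, hT1, hT2⟩ := aux_main hp hA₁ hA₂
  obtain ⟨U, hU0, hU1, hU2⟩ := aux_main hq hB₁ hB₂
  have hT : 0 ≤ T := hT0.trans hT1
  have hU : 0 ≤ U := hU0.trans hU1
  have sA : IsStrictlyPositive A₁ := Matrix.isStrictlyPositive_iff_posDef.mpr hA₁
  have sB : IsStrictlyPositive B₁ := Matrix.isStrictlyPositive_iff_posDef.mpr hB₁
  rw [aux_mpow_eq sA.nonneg] at hT2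
  rw [aux_mpow_eq sB.nonneg] at hU2
  have hXA : (A₁ ^ p).PosDef := Matrix.isStrictlyPositive_iff_posDef.mp (sA.rpow _ _)
  have hXB : (B₁ ^ q).PosDef := Matrix.isStrictlyPositive_iff_posDef.mp (sB.rpow _ _)
  have n1 : 0 ≤ T * A₁ ^ (-p) * T := by simpa using aux_conj hT (CFC.rpow_nonneg (a := A₁) (y := -p))
  have n2 : 0 ≤ U * B₁ ^ (-q) * U := by simpa using aux_conj hU (CFC.rpow_nonneg (a := B₁) (y := -q))
  have step1 := aux_kron hT0 hT1 hU0 hU1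
  have hTU : 0 ≤ T ⊗ₖ U := by
    rw [Matrix.nonneg_iff_posSemidef] at *
    exact hT.kronecker hU
  have step2 : T ⊗ₖ U ≤ geo (mpow A₁ p ⊗ₖ mpow B₁ q) (mpow A₂ p ⊗ₖ mpow B₂ q) := by
    rw [aux_mpow_eq sA.nonneg, aux_mpow_eq sB.nonneg]
    refine aux_geo (Xi := (A₁ ^ (-p)) ⊗ₖ (B₁ ^ (-q))) (hXA.kronecker hXB) hTU ?_ ?_
    · rw [← Matrix.mul_kronecker_mul, CFC.rpow_neg_mul_rpow _ sA, CFC.rpow_neg_mul_rpow _ sB,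
        Matrix.one_kronecker_one]
    · rw [← Matrix.mul_kronecker_mul, ← Matrix.mul_kronecker_mul]
      exact aux_kron n1 hT2 n2 hU2
  exact step1.trans step2

end Aux

theorem tensor_power_jointly_log_convex {k m : Type*} [Fintype k] [DecidableEq k]
    [Fintype m] [DecidableEq m] (p q : ℝ) (hp : p ∈ Set.Icc (-1 : ℝ) 0)
    (hq : q ∈ Set.Icc (-1 : ℝ) 0)
    (A₁ A₂ : Matrix k k ℂ) (B₁ B₂ : Matrix m m ℂ)
    (hA₁ : A₁.PosDef) (hA₂ : A₂.PosDef) (hB₁ : B₁.PosDef) (hB₂ : B₂.PosDef) :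
    LoewnerLE
      (mpow ((1/2 : ℝ) • (A₁ + A₂)) p ⊗ₖ mpow ((1/2 : ℝ) • (B₁ + B₂)) q)
      (geo (mpow A₁ p ⊗ₖ mpow B₁ q) (mpow A₂ p ⊗ₖ mpow B₂ q)) := 
  aux_final p q hp hq A₁ A₂ B₁ B₂ hA₁ hA₂ hB₁ hB₂
end

section
/- Let Φ : M_n(ℂ) → M_m(ℂ) be a unital positive linear map and let A be positive definite with mI ≤ A ≤ MI for scalars 0 < m < M. Then for all p ∈ (0,1], K(h,p) Φ(A)^p ≤ Φ(A^p) ≤ Φ(A)^p in the Loewner order, where h = M/m and K(h,p) is the generalized Kantorovich constant. -/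
open scoped ComplexOrder Kronecker

open Matrix in
lemma rjk_spec {n : Type*} [Fintype n] [DecidableEq n] (A : Matrix n n ℂ) (hA : A.IsHermitian) :
    ∃ (l : n → ℝ) (P : n → Matrix n n ℂ), (∀ i, (P i).PosSemidef) ∧
      (∀ f : ℝ → ℝ, cfc f A = ∑ i, f (l i) • P i) ∧ (∀ i, l i ∈ spectrum ℝ A) := by
  refine ⟨hA.eigenvalues, fun i => (hA.eigenvectorUnitary : Matrix n n ℂ) *
    diagonal (Pi.single i 1) * (hA.eigenvectorUnitary : Matrix n n ℂ)ᴴ, ?_, ?_,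
    hA.eigenvalues_mem_spectrum_real⟩
  · intro i
    refine PosSemidef.mul_mul_conjTranspose_same (PosSemidef.diagonal ?_) _
    simp [Pi.single_nonneg]
  · intro f
    rw [hA.cfc_eq, Matrix.IsHermitian.cfc, Unitary.conjStarAlgAut_apply]
    have : (diagonal (RCLike.ofReal ∘ f ∘ hA.eigenvalues) : Matrix n n ℂ) =
        ∑ i, f (hA.eigenvalues i) • diagonal (Pi.single i (1 : ℂ)) := by
      ext a b
      simp only [Matrix.sum_apply, Matrix.smul_apply, diagonal_apply]
      by_cases hab : a = b
      · subst hab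
        simp [Pi.single_apply]
      · simp [hab]
    rw [this, Finset.mul_sum, Finset.sum_mul]
    refine Finset.sum_congr rfl fun i _ => ?_
    rw [Matrix.mul_smul, Matrix.smul_mul]
    rfl

/-- The real quadratic form of a matrix at a vector. -/
noncomputable def rjkQ {n : Type*} [Fintype n] (y : n → ℂ) : Matrix n n ℂ →ₗ[ℝ] ℝ where
  toFun X := (star y ⬝ᵥ X.mulVec y).re
  map_add' X Y := by simp [Matrix.add_mulVec, dotProduct_add]
  map_smul' r X := by simp [Matrix.smul_mulVec, dotProduct_smul]

lemma rjkQ_nonneg {n : Type*} [Fintype n] (y : n → ℂ) {X : Matrix n n ℂ} (hX : X.PosSemidef) :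
    0 ≤ rjkQ y X := by
  have := hX.dotProduct_mulVec_nonneg y
  exact (Complex.le_def.1 this).1

lemma rjk_psd {n : Type*} [Fintype n] {X : Matrix n n ℂ} (hX : X.IsHermitian)
    (h : ∀ y, 0 ≤ rjkQ y X) : X.PosSemidef := by
  refine Matrix.PosSemidef.of_dotProduct_mulVec_nonneg hX fun y => ?_
  refine Complex.le_def.2 ⟨h y, ?_⟩
  exact (hX.im_star_dotProduct_mulVec_self y).symm

lemma rjk_smul {n : Type*} [Fintype n] {X : Matrix n n ℂ} (hX : X.PosSemidef) {r : ℝ}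
    (hr : 0 ≤ r) : (r • X).PosSemidef := hX.smul hr

lemma rjk_herm {n : Type*} [Fintype n] [DecidableEq n] (f : ℝ → ℝ) (A : Matrix n n ℂ) :
    (cfc f A).IsHermitian := cfc_predicate f A

lemma rjk_low {n : Type*} [Fintype n] [DecidableEq n] {A : Matrix n n ℂ} {c : ℝ}
    (h : (A - c • (1 : Matrix n n ℂ)).PosSemidef) {x : ℝ} (hx : x ∈ spectrum ℝ A) : c ≤ x := by
  have h2 := (Matrix.posSemidef_iff_isHermitian_and_spectrum_nonneg.1 h).2
  have h3 : x - c ∈ spectrum ℝ (A - c • (1 : Matrix n n ℂ)) := by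
    rw [← Algebra.algebraMap_eq_smul_one, ← spectrum.sub_singleton_eq]
    exact Set.sub_mem_sub hx rfl
  have h4 : ((x - c : ℝ) : ℂ) ∈ spectrum ℂ (A - c • (1 : Matrix n n ℂ)) :=
    spectrum.algebraMap_mem ℂ h3
  have := h2 h4
  simpa using this

lemma rjk_up {n : Type*} [Fintype n] [DecidableEq n] {A : Matrix n n ℂ} {c : ℝ}
    (h : (c • (1 : Matrix n n ℂ) - A).PosSemidef) {x : ℝ} (hx : x ∈ spectrum ℝ A) : x ≤ c := by
  have h1 : (-A - (-c) • (1 : Matrix n n ℂ)).PosSemidef := by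
    convert h using 1
    rw [neg_smul]; abel
  have h2 : -x ∈ spectrum ℝ (-A) := by
    rw [← spectrum.neg_eq]; simpa using hx
  linarith [rjk_low h1 h2]

/-- Choi-type inequality for the resolvent. -/
lemma rjk_resolvent {n m : Type*} [Fintype n] [Fintype m] [DecidableEq m]
    (l : n → ℝ) (hl : ∀ i, 0 ≤ l i) (E : n → Matrix m m ℂ) (hE : ∀ i, (E i).PosSemidef)
    (h1 : ∑ i, E i = 1) (B : Matrix m m ℂ) (hB : B = ∑ i, l i • E i) (hBp : B.PosSemidef)
    (t : ℝ) (ht : 0 < t) :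
    (∑ i, (t + l i)⁻¹ • E i - cfc (fun x : ℝ => (t + x)⁻¹) B).PosSemidef := by
  set C := cfc (fun x : ℝ => (t + x)⁻¹) B with hC
  have hCh : C.IsHermitian := rjk_herm _ _
  have hCB : C * (t • 1 + B) = 1 := by
    obtain ⟨ν, P, hP, hf, hν⟩ := rjk_spec B hBp.1
    have hpos : ∀ x ∈ spectrum ℝ B, 0 ≤ x := fun x hx =>
      rjk_low (A := B) (c := 0) (by simpa using hBp) hx
    have hcont : ∀ f : ℝ → ℝ, ContinuousOn f (spectrum ℝ B) := fun f =>
      (Matrix.finite_real_spectrum (A := B)).continuousOn f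
    have e : t • 1 + B = cfc (fun x : ℝ => t + x) B := by
      rw [cfc_add (a := B) (fun _ => t) (fun x => x) (hcont _) (hcont _), cfc_const t B hBp.1.isSelfAdjoint,
        cfc_id' ℝ B hBp.1.isSelfAdjoint, Algebra.algebraMap_eq_smul_one]
    rw [e, hC, ← cfc_mul _ _ B (hcont _) (hcont _), ← cfc_one ℝ B hBp.1.isSelfAdjoint]
    refine cfc_congr fun x hx => ?_
    have := hpos x hx
    simp only [Pi.one_apply]
    exact inv_mul_cancel₀ (by positivity)
  have key : (∑ i, (t + l i)⁻¹ • E i - C) =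
      ∑ i, (t + l i)⁻¹ • (((t + l i) • C - 1) * E i * ((t + l i) • C - 1).conjTranspose) := by
    have e1 : ∀ i, (t + l i)⁻¹ • (((t + l i) • C - 1) * E i * ((t + l i) • C - 1).conjTranspose)
        = C * ((t • E i + l i • E i)) * C - C * E i - E i * C + (t + l i)⁻¹ • E i := by
      intro i
      have h0 : (t + l i) ≠ 0 := by have := hl i; positivity
      rw [Matrix.conjTranspose_sub, Matrix.conjTranspose_smul, hCh.eq, Matrix.conjTranspose_one,
        ← add_smul]
      simp only [star_trivial, sub_mul, mul_sub, one_mul, mul_one, smul_sub, Matrix.smul_mul,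
        Matrix.mul_smul, smul_smul]
      rw [inv_mul_cancel₀ h0, ← mul_assoc, inv_mul_cancel₀ h0]
      simp only [one_mul, one_smul]
      abel
    simp_rw [e1]
    rw [Finset.sum_add_distrib, Finset.sum_sub_distrib, Finset.sum_sub_distrib,
      ← Finset.sum_mul, ← Finset.mul_sum, ← Finset.mul_sum, ← Finset.sum_mul,
      Finset.sum_add_distrib, ← Finset.smul_sum, h1, ← hB, hCB]
    simp only [one_mul, mul_one]
    abel
  rw [key]
  refine Matrix.posSemidef_sum _ fun i _ => ?_
  exact rjk_smul ((hE i).mul_mul_conjTranspose_same _) (by have := hl i; positivity)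

/-- Integration of the resolvent inequality. -/
lemma rjk_integrate {n m : Type*} [Fintype n] [Fintype m] (l a : n → ℝ) (ν b : m → ℝ)
    (hl : ∀ i, 0 ≤ l i) (hν : ∀ j, 0 ≤ ν j) (hab : ∑ i, a i = ∑ j, b j)
    (h : ∀ t : ℝ, 0 < t → ∑ j, (t + ν j)⁻¹ * b j ≤ ∑ i, (t + l i)⁻¹ * a i)
    (p : ℝ) (hp : p ∈ Set.Ioo (0 : ℝ) 1) :
    ∑ i, (l i) ^ p * a i ≤ ∑ j, (ν j) ^ p * b j := by
  obtain ⟨μ, hμ⟩ := Real.exists_measure_rpow_eq_integral_rpowIntegrand₀₁ hp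
  have hi : ∀ i, MeasureTheory.IntegrableOn
      (fun t => Real.rpowIntegrand₀₁ p t (l i) * a i) (Set.Ioi 0) μ :=
    fun i => (hμ _ (hl i)).1.mul_const _
  have hj : ∀ j, MeasureTheory.IntegrableOn
      (fun t => Real.rpowIntegrand₀₁ p t (ν j) * b j) (Set.Ioi 0) μ :=
    fun j => (hμ _ (hν j)).1.mul_const _
  have e1 : ∑ i, (l i) ^ p * a i =
      ∫ t in Set.Ioi 0, ∑ i, Real.rpowIntegrand₀₁ p t (l i) * a i ∂μ := by
    rw [MeasureTheory.integral_finsetSum _ fun i _ => hi i]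
    refine Finset.sum_congr rfl fun i _ => ?_
    rw [MeasureTheory.integral_mul_const, ← (hμ _ (hl i)).2]
  have e2 : ∑ j, (ν j) ^ p * b j =
      ∫ t in Set.Ioi 0, ∑ j, Real.rpowIntegrand₀₁ p t (ν j) * b j ∂μ := by
    rw [MeasureTheory.integral_finsetSum _ fun i _ => hj i]
    refine Finset.sum_congr rfl fun i _ => ?_
    rw [MeasureTheory.integral_mul_const, ← (hμ _ (hν i)).2]
  rw [e1, e2]
  refine MeasureTheory.setIntegral_mono_on (MeasureTheory.integrable_finsetSum _ fun i _ => hi i)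
    (MeasureTheory.integrable_finsetSum _ fun i _ => hj i) measurableSet_Ioi fun t ht => ?_
  have ht' : 0 < t := ht
  have g1 : ∑ i, Real.rpowIntegrand₀₁ p t (l i) * a i
      = t ^ p * (t⁻¹ * ∑ i, a i - ∑ i, (t + l i)⁻¹ * a i) := by
    rw [Finset.mul_sum, ← Finset.sum_sub_distrib, Finset.mul_sum]
    refine Finset.sum_congr rfl fun i _ => ?_
    rw [Real.rpowIntegrand₀₁]; ring
  have g2 : ∑ i, Real.rpowIntegrand₀₁ p t (ν i) * b i
      = t ^ p * (t⁻¹ * ∑ i, b i - ∑ i, (t + ν i)⁻¹ * b i) := by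
    rw [Finset.mul_sum, ← Finset.sum_sub_distrib, Finset.mul_sum]
    refine Finset.sum_congr rfl fun i _ => ?_
    rw [Real.rpowIntegrand₀₁]; ring
  rw [g1, g2, hab]
  have := h t ht'
  gcongr

/-- The scalar facts: chord below the concave function, and AM-GM for the chord. -/
lemma rjk_scalar (m₀ M₀ p : ℝ) (hm : 0 < m₀) (hmM : m₀ < M₀) (hp0 : 0 < p) (hp1 : p < 1) :
    ∃ α β : ℝ, (∀ x, m₀ ≤ x → x ≤ M₀ → α * x + β ≤ x ^ p) ∧
      (∀ x, 0 ≤ x → Kconst (M₀ / m₀) p * x ^ p ≤ α * x + β) := by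
  set h := M₀ / m₀ with hh
  have h1 : 1 < h := by rw [hh, lt_div_iff₀ hm]; linarith
  have hM : M₀ = h * m₀ := by rw [hh]; field_simp
  have hmp : 0 < m₀ ^ p := Real.rpow_pos_of_pos hm p
  have hhp1 : 1 < h ^ p := Real.one_lt_rpow h1 hp0
  have hhp2 : h ^ p < h := by
    simpa using Real.rpow_lt_rpow_of_exponent_lt h1 hp1
  set c := (h - h ^ p) / ((1 - p) * (h - 1)) with hc
  set d := (h ^ p - 1) / (p * (h - 1)) with hd
  have p1 : 0 < 1 - p := by linarith
  have q1 : 0 < h - 1 := by linarith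
  have q2 : 0 < h - h ^ p := by linarith
  have q3 : 0 < h ^ p - 1 := by linarith
  have hc0 : 0 < c := by positivity
  have hd0 : 0 < d := by positivity
  have hK : Kconst h p = c * (d / c) ^ p := by
    have n1 : p - 1 ≠ 0 := by linarith
    have n2 : h ^ p - h ≠ 0 := by linarith
    have k1 : (h ^ p - h) / ((p - 1) * (h - 1)) = c := by
      rw [hc, div_eq_div_iff (by positivity) (by positivity)]; ring
    have k2 : ((p - 1) / p) * ((h ^ p - 1) / (h ^ p - h)) = d / c := by
      rw [hc, hd, div_div_div_eq, div_mul_div_comm, div_eq_div_iff (by positivity) (by positivity)]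
      ring
    rw [Kconst, k1, k2]
  refine ⟨m₀ ^ p * (p * d) / m₀, m₀ ^ p * ((1 - p) * c), ?_, ?_⟩
  · intro x hx1 hx2
    obtain ⟨z, rfl⟩ : ∃ z, x = m₀ * z := ⟨x / m₀, by field_simp⟩
    have hz1 : 1 ≤ z := by nlinarith
    have hz2 : z ≤ h := by rw [hM] at hx2; nlinarith
    rw [Real.mul_rpow hm.le (by linarith)]
    have cv := Real.concaveOn_rpow hp0.le hp1.le
    have a0 : 0 ≤ (h - z) / (h - 1) := div_nonneg (by linarith) q1.le
    have b0 : 0 ≤ (z - 1) / (h - 1) := div_nonneg (by linarith) q1.le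
    have m1 : (1 : ℝ) ∈ Set.Ici (0 : ℝ) := Set.mem_Ici.2 zero_le_one
    have m2 : h ∈ Set.Ici (0 : ℝ) := Set.mem_Ici.2 (by linarith)
    have conc := cv.2 m1 m2 a0 b0 (by field_simp; ring)
    simp only [smul_eq_mul, Real.one_rpow, mul_one] at conc
    have e : (h - z) / (h - 1) + (z - 1) / (h - 1) * h = z := by field_simp; ring
    rw [e] at conc
    have e2 : m₀ ^ p * (p * d) / m₀ * (m₀ * z) + m₀ ^ p * ((1 - p) * c)
        = m₀ ^ p * ((h - z) / (h - 1) + (z - 1) / (h - 1) * h ^ p) := by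
      rw [hc, hd]; field_simp; ring
    rw [e2]
    gcongr
  · intro x hx
    obtain ⟨z, rfl⟩ : ∃ z, x = m₀ * z := ⟨x / m₀, by field_simp⟩
    have hz : 0 ≤ z := nonneg_of_mul_nonneg_right hx hm
    rw [Real.mul_rpow hm.le hz, hK]
    have hw : 0 ≤ d / c * z := by positivity
    have bern := rpow_one_add_le_one_add_mul_self (s := d / c * z - 1) (by linarith)
      hp0.le hp1.le
    rw [add_sub_cancel, Real.mul_rpow (by positivity) hz] at bern
    calc c * (d / c) ^ p * (m₀ ^ p * z ^ p) = m₀ ^ p * c * ((d / c) ^ p * z ^ p) := by ring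
      _ ≤ m₀ ^ p * c * (1 + p * (d / c * z - 1)) := by gcongr
      _ = _ := by field_simp; ring

theorem reverse_jensen_kantorovich {n m : Type*} [Fintype n] [DecidableEq n]
    [Fintype m] [DecidableEq m]
    (Φ : Matrix n n ℂ →ₗ[ℂ] Matrix m m ℂ)
    (hΦpos : ∀ A : Matrix n n ℂ, A.PosSemidef → (Φ A).PosSemidef)
    (hΦunital : Φ 1 = 1)
    (A : Matrix n n ℂ) (hA : A.PosDef)
    (m₀ M₀ : ℝ) (hm : 0 < m₀) (hmM : m₀ < M₀)
    (hlow : LoewnerLE (m₀ • (1 : Matrix n n ℂ)) A)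
    (hup : LoewnerLE A (M₀ • (1 : Matrix n n ℂ)))
    (p : ℝ) (hp0 : 0 < p) (hp1 : p ≤ 1) :
    LoewnerLE (Kconst (M₀ / m₀) p • mpow (Φ A) p) (Φ (mpow A p)) ∧
      LoewnerLE (Φ (mpow A p)) (mpow (Φ A) p) := by
  classical
  have hB : (Φ A).PosSemidef := hΦpos A hA.posSemidef
  obtain ⟨l, P, hP, hfA, hl⟩ := rjk_spec A hA.1
  obtain ⟨ν, Q, hQ, hfB, hν⟩ := rjk_spec (Φ A) hB.1
  have hl1 : ∀ i, m₀ ≤ l i := fun i => rjk_low hlow (hl i)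
  have hl2 : ∀ i, l i ≤ M₀ := fun i => rjk_up hup (hl i)
  have hl0 : ∀ i, 0 ≤ l i := fun i => hm.le.trans (hl1 i)
  have hν0 : ∀ j, 0 ≤ ν j := fun j => rjk_low (c := 0) (by simpa using hB) (hν j)
  set E : n → Matrix m m ℂ := fun i => Φ (P i) with hEdef
  have hE : ∀ i, (E i).PosSemidef := fun i => hΦpos _ (hP i)
  have hΦf : ∀ f : ℝ → ℝ, Φ (cfc f A) = ∑ i, f (l i) • E i := by
    intro f
    rw [hfA f, map_sum]
    refine Finset.sum_congr rfl fun i _ => ?_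
    rw [hEdef, ← Complex.coe_smul, map_smul, Complex.coe_smul]
  clear_value E
  have hE1 : ∑ i, E i = 1 := by
    have := hΦf (fun _ => 1)
    rw [cfc_const_one ℝ A hA.1.isSelfAdjoint, hΦunital] at this
    simpa using this.symm
  have hEA : Φ A = ∑ i, l i • E i := by
    have := hΦf (fun x => x)
    rwa [cfc_id' ℝ A hA.1.isSelfAdjoint] at this
  have hQ1 : ∑ j, Q j = 1 := by
    have := hfB (fun _ => 1)
    rw [cfc_const_one ℝ (Φ A) hB.1.isSelfAdjoint] at this
    simpa using this.symm
  have hQA : Φ A = ∑ j, ν j • Q j := by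
    have := hfB (fun x => x)
    rwa [cfc_id' ℝ (Φ A) hB.1.isSelfAdjoint] at this
  have hermL : (Φ (mpow A p)).IsHermitian := by
    refine (hΦpos _ ?_).1
    rw [mpow, hfA]
    exact Matrix.posSemidef_sum _ fun i _ => rjk_smul (hP i) (Real.rpow_nonneg (hl0 i) p)
  have hermR : (mpow (Φ A) p).IsHermitian := rjk_herm _ _
  have qL : ∀ y, rjkQ y (Φ (mpow A p)) = ∑ i, l i ^ p * rjkQ y (E i) := by
    intro y; rw [mpow, hΦf]; simp
  have qR : ∀ y, rjkQ y (mpow (Φ A) p) = ∑ j, ν j ^ p * rjkQ y (Q j) := by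
    intro y; rw [mpow, hfB]; simp
  rcases hp1.eq_or_lt with rfl | hp1
  · have e1 : mpow A 1 = A := by
      simp only [mpow, Real.rpow_one]; exact cfc_id' ℝ A hA.1.isSelfAdjoint
    have e2 : mpow (Φ A) 1 = Φ A := by
      simp only [mpow, Real.rpow_one]; exact cfc_id' ℝ (Φ A) hB.1.isSelfAdjoint
    rw [e1, e2]
    constructor
    · simpa [LoewnerLE, Kconst] using hB
    · simpa [LoewnerLE] using Matrix.PosSemidef.zero
  constructor
  · obtain ⟨α, β, h1, h2⟩ := rjk_scalar m₀ M₀ p hm hmM hp0 hp1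
    refine rjk_psd (hermL.sub (hermR.smul (IsSelfAdjoint.all _))) fun y => ?_
    rw [map_sub, map_smul, qL, qR, sub_nonneg, smul_eq_mul, Finset.mul_sum]
    have s1 : ∑ i, rjkQ y (E i) = ∑ j, rjkQ y (Q j) := by
      rw [← map_sum, ← map_sum, hE1, hQ1]
    have s2 : ∑ i, l i * rjkQ y (E i) = ∑ j, ν j * rjkQ y (Q j) := by
      have := congrArg (rjkQ y) (hEA.symm.trans hQA)
      simpa using this
    calc ∑ j, Kconst (M₀ / m₀) p * (ν j ^ p * rjkQ y (Q j))
        ≤ ∑ j, (α * ν j + β) * rjkQ y (Q j) := by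
          refine Finset.sum_le_sum fun j _ => ?_
          rw [← mul_assoc]
          exact mul_le_mul_of_nonneg_right (h2 _ (hν0 j)) (rjkQ_nonneg y (hQ j))
      _ = α * ∑ j, ν j * rjkQ y (Q j) + β * ∑ j, rjkQ y (Q j) := by
          rw [Finset.mul_sum, Finset.mul_sum, ← Finset.sum_add_distrib]
          exact Finset.sum_congr rfl fun j _ => by ring
      _ = ∑ i, (α * l i + β) * rjkQ y (E i) := by
          rw [← s1, ← s2, Finset.mul_sum, Finset.mul_sum, ← Finset.sum_add_distrib]
          exact Finset.sum_congr rfl fun j _ => by ring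
      _ ≤ ∑ i, l i ^ p * rjkQ y (E i) := by
          refine Finset.sum_le_sum fun i _ => ?_
          exact mul_le_mul_of_nonneg_right (h1 _ (hl1 i) (hl2 i)) (rjkQ_nonneg y (hE i))
  · refine rjk_psd (hermR.sub hermL) fun y => ?_
    rw [map_sub, qL, qR, sub_nonneg]
    refine rjk_integrate l _ ν _ hl0 hν0 ?_ ?_ p ⟨hp0, hp1⟩
    · rw [← map_sum, ← map_sum, hE1, hQ1]
    · intro t ht
      have := rjkQ_nonneg y (rjk_resolvent l hl0 E hE hE1 (Φ A) hEA hB t ht)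
      rw [hfB] at this
      simpa using this
end

section
/- For positive definite matrices A₁,…,A_n and B₁,…,B_n and 0 < p ≤ 1, the trace Minkowski inequality holds: Tr[(Σᵢ (Aᵢ+Bᵢ)^p)^{1/p}] ≥ Tr[(Σᵢ Aᵢ^p)^{1/p}] + Tr[(Σᵢ Bᵢ^p)^{1/p}]. -/
open scoped ComplexOrder Kronecker

namespace CarlenLieb

open Matrix MeasureTheory

variable {d : Type*} [Fintype d] [DecidableEq d]

/-- Spectral data of a positive definite matrix. -/
structure Spec (A : Matrix d d ℂ) (U : Matrix d d ℂ) (a : d → ℝ) : Prop where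
  left : Uᴴ * U = 1
  right : U * Uᴴ = 1
  pos : ∀ i, 0 < a i
  cfc_eq : ∀ f : ℝ → ℝ, cfc f A = U * diagonal (fun i => ((f (a i) : ℝ) : ℂ)) * Uᴴ
  self_eq : A = U * diagonal (fun i => ((a i : ℝ) : ℂ)) * Uᴴ

lemma exists_spec {A : Matrix d d ℂ} (hA : A.PosDef) : ∃ U a, Spec A U a := by
  refine ⟨hA.1.eigenvectorUnitary, hA.1.eigenvalues, ?_, ?_, hA.eigenvalues_pos, ?_, ?_⟩
  · exact Unitary.coe_star_mul_self _
  · exact Unitary.coe_mul_star_self _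
  · intro f
    rw [hA.1.cfc_eq, IsHermitian.cfc, Unitary.conjStarAlgAut_apply]
    rfl
  · conv_lhs => rw [hA.1.spectral_theorem, Unitary.conjStarAlgAut_apply]
    rfl

lemma trD (D : d → ℝ) (M : Matrix d d ℂ) :
    (Mᴴ * diagonal (fun i => (D i : ℂ)) * M).trace.re
      = ∑ i, ∑ j, D i * Complex.normSq (M i j) := by
  rw [Finset.sum_comm]
  simp only [Matrix.trace, diag_apply, Matrix.mul_apply (M := Mᴴ * _), Matrix.mul_diagonal,
    conjTranspose_apply, Complex.re_sum]
  refine Finset.sum_congr rfl fun j _ => Finset.sum_congr rfl fun i _ => ?_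
  simp [Complex.normSq_apply]
  ring

lemma trE (E : d → ℝ) (M : Matrix d d ℂ) :
    (M * diagonal (fun i => (E i : ℂ)) * Mᴴ).trace.re
      = ∑ i, ∑ j, E j * Complex.normSq (M i j) := by
  simp only [Matrix.trace, diag_apply, Matrix.mul_apply (N := Mᴴ), Matrix.mul_diagonal,
    conjTranspose_apply, Complex.re_sum]
  refine Finset.sum_congr rfl fun j _ => Finset.sum_congr rfl fun i _ => ?_
  simp [Complex.normSq_apply]
  ring

lemma trDE (D E : d → ℝ) (U V : Matrix d d ℂ) :
    ((U * diagonal (fun i => (D i : ℂ)) * Uᴴ) *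
      (V * diagonal (fun i => (E i : ℂ)) * Vᴴ)).trace.re
      = ∑ i, ∑ j, D i * E j * Complex.normSq ((Uᴴ * V) i j) := by
  have h : ((U * diagonal (fun i => (D i : ℂ)) * Uᴴ) *
      (V * diagonal (fun i => (E i : ℂ)) * Vᴴ)).trace =
      (diagonal (fun i => (D i : ℂ)) * ((Uᴴ * V) * diagonal (fun i => (E i : ℂ)) *
        (Uᴴ * V)ᴴ)).trace := by
    rw [Matrix.mul_assoc U, Matrix.mul_assoc U, Matrix.trace_mul_comm U]
    simp only [conjTranspose_mul, conjTranspose_conjTranspose, Matrix.mul_assoc]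
  rw [h]
  generalize Uᴴ * V = M
  simp only [Matrix.trace, diag_apply, Matrix.diagonal_mul, Matrix.mul_apply (N := Mᴴ),
    Matrix.mul_diagonal, conjTranspose_apply, Complex.re_sum, Finset.mul_sum]
  refine Finset.sum_congr rfl fun j _ => Finset.sum_congr rfl fun i _ => ?_
  simp [Complex.normSq_apply]
  ring

lemma trace_cfc_mul {A B U V : Matrix d d ℂ} {a b : d → ℝ} (hA : Spec A U a) (hB : Spec B V b)
    (f g : ℝ → ℝ) : (cfc f A * cfc g B).trace.re
      = ∑ i, ∑ j, f (a i) * g (b j) * Complex.normSq ((Uᴴ * V) i j) := by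
  rw [hA.cfc_eq, hB.cfc_eq, trDE (fun i => f (a i)) (fun i => g (b i))]

lemma Spec.cfc_one {A U : Matrix d d ℂ} {a : d → ℝ} (hA : Spec A U a) :
    cfc (fun _ : ℝ => (1 : ℝ)) A = 1 := by
  rw [hA.cfc_eq]
  simp [hA.right]

/-- The quadratic functional whose minimum is the parallel sum. -/
noncomputable def Phi (A Z : Matrix d d ℂ) (t : ℝ) (K : Matrix d d ℂ) : ℝ :=
  (Kᴴ * A * K).trace.re + t * ((1 - K) * Z * (1 - K)ᴴ).trace.re

lemma Phi_add (A Z B W : Matrix d d ℂ) (t : ℝ) (K : Matrix d d ℂ) :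
    Phi (A + B) (Z + W) t K = Phi A Z t K + Phi B W t K := by
  simp only [Phi, Matrix.mul_add, Matrix.add_mul, Matrix.trace_add, Complex.add_re]
  ring

lemma Phi_eq {A Z U V : Matrix d d ℂ} {a z : d → ℝ} (hA : Spec A U a) (hZ : Spec Z V z)
    (t : ℝ) (k : Matrix d d ℂ) :
    Phi A Z t (U * k * Vᴴ) = ∑ i, ∑ j, (a i * Complex.normSq (k i j) +
      t * (z j * Complex.normSq ((Uᴴ * V) i j - k i j))) := by
  have h1 : ((U * k * Vᴴ)ᴴ * A * (U * k * Vᴴ)).trace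
      = (kᴴ * diagonal (fun i => (a i : ℂ)) * k).trace := by
    conv_lhs => rw [hA.self_eq]
    have : (U * k * Vᴴ)ᴴ * (U * diagonal (fun i => (a i : ℂ)) * Uᴴ) * (U * k * Vᴴ)
      = V * (kᴴ * (Uᴴ * U) * diagonal (fun i => (a i : ℂ)) * (Uᴴ * U) * k * Vᴴ) := by
      simp only [conjTranspose_mul, conjTranspose_conjTranspose, Matrix.mul_assoc]
    rw [this, Matrix.trace_mul_comm, hA.left, Matrix.mul_assoc _ Vᴴ V, hZ.left]
    simp
  have h2 : ((1 - U * k * Vᴴ) * Z * (1 - U * k * Vᴴ)ᴴ).trace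
      = ((Uᴴ * V - k) * diagonal (fun i => (z i : ℂ)) * (Uᴴ * V - k)ᴴ).trace := by
    have e : 1 - U * k * Vᴴ = U * (Uᴴ * V - k) * Vᴴ := by
      rw [Matrix.mul_sub, Matrix.sub_mul, ← Matrix.mul_assoc, hA.right, Matrix.one_mul, hZ.right]
    rw [e]
    generalize Uᴴ * V - k = m
    conv_lhs => rw [hZ.self_eq]
    have : U * m * Vᴴ * (V * diagonal (fun i => (z i : ℂ)) * Vᴴ) * (U * m * Vᴴ)ᴴ
      = U * (m * (Vᴴ * V) * diagonal (fun i => (z i : ℂ)) * (Vᴴ * V) * mᴴ * Uᴴ) := by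
      simp only [conjTranspose_mul, conjTranspose_conjTranspose, Matrix.mul_assoc]
    rw [this, Matrix.trace_mul_comm, hZ.left, Matrix.mul_assoc _ Uᴴ U, hA.left]
    simp
  rw [Phi, h1, h2, trD, trE]
  simp only [Finset.mul_sum, Finset.sum_add_distrib, Matrix.sub_apply]

lemma scalar_ge {a s : ℝ} (ha : 0 < a) (hs : 0 < s) (k c : ℂ) :
    a * s / (a + s) * Complex.normSq c ≤
      a * Complex.normSq k + s * Complex.normSq (c - k) := by
  rw [div_mul_eq_mul_div, div_le_iff₀ (by positivity)]
  simp only [Complex.normSq_apply, Complex.sub_re, Complex.sub_im]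
  nlinarith [sq_nonneg ((a + s) * k.re - s * c.re), sq_nonneg ((a + s) * k.im - s * c.im)]

lemma scalar_eq {a s : ℝ} (ha : 0 < a) (hs : 0 < s) (c : ℂ) :
    a * s / (a + s) * Complex.normSq c =
      a * Complex.normSq (((s / (a + s) : ℝ) : ℂ) * c) +
        s * Complex.normSq (c - ((s / (a + s) : ℝ) : ℂ) * c) := by
  have : c - ((s / (a + s) : ℝ) : ℂ) * c = ((1 - s / (a + s) : ℝ) : ℂ) * c := by
    push_cast; ring
  rw [this, Complex.normSq_mul, Complex.normSq_mul, Complex.normSq_ofReal, Complex.normSq_ofReal]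
  have : a + s ≠ 0 := by positivity
  field_simp
  ring

/-- Parallel-sum trace. -/
noncomputable def F (U V : Matrix d d ℂ) (a z : d → ℝ) (t : ℝ) : ℝ :=
  ∑ i, ∑ j, a i * (t * z j) / (a i + t * z j) * Complex.normSq ((Uᴴ * V) i j)

lemma F_le_Phi {A Z U V : Matrix d d ℂ} {a z : d → ℝ} (hA : Spec A U a) (hZ : Spec Z V z)
    {t : ℝ} (ht : 0 < t) (K : Matrix d d ℂ) : F U V a z t ≤ Phi A Z t K := by
  have e : K = U * (Uᴴ * K * V) * Vᴴ := by
    have : U * (Uᴴ * K * V) * Vᴴ = (U * Uᴴ) * K * (V * Vᴴ) := by simp only [Matrix.mul_assoc]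
    rw [this, hA.right, hZ.right]; simp
  rw [e, Phi_eq hA hZ]
  refine Finset.sum_le_sum fun i _ => Finset.sum_le_sum fun j _ => ?_
  rw [← mul_assoc t]
  exact scalar_ge (hA.pos i) (mul_pos ht (hZ.pos j)) _ _

lemma exists_F_eq {A Z U V : Matrix d d ℂ} {a z : d → ℝ} (hA : Spec A U a) (hZ : Spec Z V z)
    {t : ℝ} (ht : 0 < t) : ∃ K, F U V a z t = Phi A Z t K := by
  refine ⟨U * (Matrix.of fun i j =>
    ((t * z j / (a i + t * z j) : ℝ) : ℂ) * (Uᴴ * V) i j) * Vᴴ, ?_⟩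
  rw [Phi_eq hA hZ]
  refine Finset.sum_congr rfl fun i _ => Finset.sum_congr rfl fun j _ => ?_
  rw [← mul_assoc t, Matrix.of_apply]
  exact scalar_eq (hA.pos i) (mul_pos ht (hZ.pos j)) _

/-- The integrand. -/
noncomputable def G (p : ℝ) (U V : Matrix d d ℂ) (a z : d → ℝ) (t : ℝ) : ℝ :=
  ∑ i, ∑ j, z j * Complex.normSq ((Uᴴ * V) i j) * Real.rpowIntegrand₀₁ p t (a i / z j)

lemma G_eq {p : ℝ} (hp : p ∈ Set.Ioo 0 1) (U V : Matrix d d ℂ) {a z : d → ℝ}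
    (ha : ∀ i, 0 < a i) (hz : ∀ i, 0 < z i) {t : ℝ} (ht : 0 < t) :
    G p U V a z t = t ^ (p - 1) / t * F U V a z t := by
  simp only [G, F, Finset.mul_sum]
  refine Finset.sum_congr rfl fun i _ => Finset.sum_congr rfl fun j _ => ?_
  have h1 := ha i
  have h2 := hz j
  rw [Real.rpowIntegrand₀₁_eq_pow_div hp ht.le (by positivity)]
  have : a i + t * z j ≠ 0 := by positivity
  have : t * z j + a i ≠ 0 := by positivity
  have : t + a i / z j ≠ 0 := by positivity
  field_simp
  ring

lemma G_integrable {p : ℝ} (hp : p ∈ Set.Ioo 0 1) (U V : Matrix d d ℂ) {a z : d → ℝ}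
    (ha : ∀ i, 0 < a i) (hz : ∀ i, 0 < z i) : IntegrableOn (G p U V a z) (Set.Ioi 0) := by
  unfold G
  refine integrable_finsetSum _ fun i _ => integrable_finsetSum _ fun j _ => ?_
  exact (Real.integrableOn_rpowIntegrand₀₁_Ioi hp (div_pos (ha i) (hz j)).le).const_mul _

lemma G_integral {p : ℝ} (hp : p ∈ Set.Ioo 0 1) {A Z U V : Matrix d d ℂ} {a z : d → ℝ}
    (hA : Spec A U a) (hZ : Spec Z V z) :
    ∫ t in Set.Ioi 0, G p U V a z t =
      (mpow A p * mpow Z (1 - p)).trace.re * ∫ t in Set.Ioi 0, Real.rpowIntegrand₀₁ p t 1 := by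
  have hi : ∀ i j, IntegrableOn (fun t => z j * Complex.normSq ((Uᴴ * V) i j) *
      Real.rpowIntegrand₀₁ p t (a i / z j)) (Set.Ioi 0) := fun i j =>
    (Real.integrableOn_rpowIntegrand₀₁_Ioi hp (div_pos (hA.pos i) (hZ.pos j)).le).const_mul _
  unfold G mpow
  rw [trace_cfc_mul hA hZ, integral_finsetSum _
    (fun i _ => integrable_finsetSum _ fun j _ => hi i j), Finset.sum_mul]
  refine Finset.sum_congr rfl fun i _ => ?_
  rw [integral_finsetSum _ (fun j _ => hi i j), Finset.sum_mul]
  refine Finset.sum_congr rfl fun j _ => ?_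
  have h1 := hA.pos i
  have h2 := hZ.pos j
  rw [integral_const_mul, Real.integral_rpowIntegrand₀₁_eq_rpow_mul_const hp (by positivity),
    Real.div_rpow h1.le h2.le, Real.rpow_sub h2, Real.rpow_one]
  ring

/-- Lieb's concavity theorem (with `K = 1`), in superadditive form. -/
lemma lieb {p : ℝ} (hp : p ∈ Set.Ioo 0 1) {A B Z W : Matrix d d ℂ}
    (hA : A.PosDef) (hB : B.PosDef) (hZ : Z.PosDef) (hW : W.PosDef) :
    (mpow A p * mpow Z (1 - p)).trace.re + (mpow B p * mpow W (1 - p)).trace.re ≤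
      (mpow (A + B) p * mpow (Z + W) (1 - p)).trace.re := by
  obtain ⟨U₁, a₁, s₁⟩ := exists_spec hA
  obtain ⟨U₂, a₂, s₂⟩ := exists_spec hB
  obtain ⟨U₃, a₃, s₃⟩ := exists_spec (hA.add hB)
  obtain ⟨V₁, z₁, r₁⟩ := exists_spec hZ
  obtain ⟨V₂, z₂, r₂⟩ := exists_spec hW
  obtain ⟨V₃, z₃, r₃⟩ := exists_spec (hZ.add hW)
  refine le_of_mul_le_mul_right ?_ (Real.integral_rpowIntegrand₀₁_one_pos hp)
  rw [add_mul, ← G_integral hp s₁ r₁, ← G_integral hp s₂ r₂, ← G_integral hp s₃ r₃,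
    ← integral_add (G_integrable hp _ _ s₁.pos r₁.pos) (G_integrable hp _ _ s₂.pos r₂.pos)]
  refine setIntegral_mono_on ((G_integrable hp _ _ s₁.pos r₁.pos).add
    (G_integrable hp _ _ s₂.pos r₂.pos)) (G_integrable hp _ _ s₃.pos r₃.pos)
    measurableSet_Ioi fun t ht => ?_
  have ht : 0 < t := ht
  rw [G_eq hp _ _ s₁.pos r₁.pos ht, G_eq hp _ _ s₂.pos r₂.pos ht, G_eq hp _ _ s₃.pos r₃.pos ht,
    ← mul_add]
  refine mul_le_mul_of_nonneg_left ?_ (by positivity)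
  obtain ⟨K, hK⟩ := exists_F_eq s₃ r₃ ht
  rw [hK, Phi_add]
  exact add_le_add (F_le_Phi s₁ r₁ ht K) (F_le_Phi s₂ r₂ ht K)

/-- Trace Young inequality. -/
lemma young {p : ℝ} (hp : p ∈ Set.Ioo 0 1) {Y Z : Matrix d d ℂ}
    (hY : Y.PosDef) (hZ : Z.PosDef) :
    (Y * mpow Z (1 - p)).trace.re ≤
      p * (mpow Y (1 / p)).trace.re + (1 - p) * Z.trace.re := by
  obtain ⟨U, a, s⟩ := exists_spec hY
  obtain ⟨V, z, r⟩ := exists_spec hZ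
  have h1 : (Y * mpow Z (1 - p)).trace.re
      = ∑ i, ∑ j, a i * (z j) ^ (1 - p) * Complex.normSq ((Uᴴ * V) i j) := by
    have := trace_cfc_mul s r (fun x => x) (fun x => x ^ (1 - p))
    rwa [s.cfc_eq, ← s.self_eq] at this
  have h2 : (mpow Y (1 / p)).trace.re
      = ∑ i, ∑ j, (a i) ^ (1 / p) * 1 * Complex.normSq ((Uᴴ * V) i j) := by
    have := trace_cfc_mul s r (fun x => x ^ (1 / p)) (fun _ => 1)
    rwa [r.cfc_one, Matrix.mul_one] at this
  have h3 : Z.trace.re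
      = ∑ i, ∑ j, 1 * z j * Complex.normSq ((Uᴴ * V) i j) := by
    have := trace_cfc_mul s r (fun _ => 1) (fun x => x)
    rwa [s.cfc_one, Matrix.one_mul, r.cfc_eq, ← r.self_eq] at this
  rw [h1, h2, h3]
  simp only [Finset.mul_sum, ← Finset.sum_add_distrib]
  refine Finset.sum_le_sum fun i _ => Finset.sum_le_sum fun j _ => ?_
  have ha := s.pos i
  have hz := r.pos j
  have hp0 : 0 < p := hp.1
  have hp1 : p < 1 := hp.2
  have key := Real.geom_mean_le_arith_mean2_weighted hp0.le (sub_nonneg.2 hp1.le)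
    (Real.rpow_nonneg ha.le (1 / p)) hz.le (by ring)
  rw [← Real.rpow_mul ha.le, one_div_mul_cancel hp0.ne', Real.rpow_one] at key
  have := mul_le_mul_of_nonneg_right key (Complex.normSq_nonneg ((Uᴴ * V) i j))
  linarith

lemma mpow_posDef {A : Matrix d d ℂ} (hA : A.PosDef) (q : ℝ) : (mpow A q).PosDef := by
  obtain ⟨U, a, s⟩ := exists_spec hA
  rw [mpow, s.cfc_eq]
  have hu : IsUnit U := ⟨⟨U, Uᴴ, s.right, s.left⟩, rfl⟩
  have := (hu.posDef_star_right_conjugate_iff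
    (x := diagonal (fun i => ((a i ^ q : ℝ) : ℂ)))).2 ?_
  · exact this
  · rw [Matrix.posDef_diagonal_iff]
    intro i
    exact_mod_cast Real.rpow_pos_of_pos (s.pos i) q

lemma mul_mpow {p : ℝ} (hp : 0 < p) {X : Matrix d d ℂ} (hX : X.PosDef) :
    X * mpow (mpow X (1 / p)) (1 - p) = mpow X (1 / p) := by
  obtain ⟨U, a, s⟩ := exists_spec hX
  have hsa : IsSelfAdjoint X := hX.1
  have hfin : (spectrum ℝ X).Finite := by
    rw [hX.1.spectrum_real_eq_range_eigenvalues]; exact Set.finite_range _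
  have h1 : mpow (mpow X (1 / p)) (1 - p) = cfc (fun x : ℝ => (x ^ (1 / p)) ^ (1 - p)) X := by
    unfold mpow
    rw [← cfc_comp' (fun x : ℝ => x ^ (1 - p)) (fun x : ℝ => x ^ (1 / p)) X
      ((hfin.image _).continuousOn _) (hfin.continuousOn _) hsa]
  rw [h1, mpow, s.cfc_eq, s.cfc_eq]
  conv_lhs => enter [1]; rw [s.self_eq]
  have : ∀ D E : Matrix d d ℂ, (U * D * Uᴴ) * (U * E * Uᴴ) = U * (D * E) * Uᴴ := by
    intro D E
    have : (U * D * Uᴴ) * (U * E * Uᴴ) = U * (D * (Uᴴ * U) * E) * Uᴴ := by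
      simp only [Matrix.mul_assoc]
    rw [this, s.left, Matrix.mul_one]
  rw [this, diagonal_mul_diagonal]
  congr 3
  ext i
  have ha := s.pos i
  rw [← Complex.ofReal_mul, ← Real.rpow_mul ha.le]
  congr 1
  conv_lhs => enter [1]; rw [← Real.rpow_one (a i)]
  rw [← Real.rpow_add ha]
  congr 1
  field_simp
  ring

lemma mpow_one {X : Matrix d d ℂ} (hX : X.IsHermitian) : mpow X 1 = X := by
  have hsa : IsSelfAdjoint X := hX
  simp only [mpow, Real.rpow_one]
  exact cfc_id' ℝ X

lemma sum_posDef {N : ℕ} (hN : N ≠ 0) {X : Fin N → Matrix d d ℂ} (h : ∀ i, (X i).PosDef) :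
    (∑ i, X i).PosDef := by
  have : NeZero N := ⟨hN⟩
  exact Matrix.posDef_sum ⟨0, Finset.mem_univ _⟩ fun i _ => h i

end CarlenLieb

open CarlenLieb

theorem carlen_lieb_trace_minkowski_concave {d : Type*} [Fintype d] [DecidableEq d]
    (N : ℕ) (A B : Fin N → Matrix d d ℂ)
    (hA : ∀ i, (A i).PosDef) (hB : ∀ i, (B i).PosDef)
    (p : ℝ) (hp0 : 0 < p) (hp1 : p ≤ 1) :
    (mpow (∑ i, mpow (A i) p) (1/p)).trace.re
        + (mpow (∑ i, mpow (B i) p) (1/p)).trace.re ≤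
      (mpow (∑ i, mpow (A i + B i) p) (1/p)).trace.re := by
  rcases Nat.eq_zero_or_pos N with rfl | hN
  · have h0 : mpow (0 : Matrix d d ℂ) (1 / p) = 0 := by
      have : (0 : ℝ) ^ (1 / p) = 0 := Real.zero_rpow (by positivity)
      rw [mpow, cfc_apply_zero, this, map_zero]
    simp [-one_div, h0]
  have hN := hN.ne'
  rcases hp1.eq_or_lt with rfl | hp1
  · have hs : ∀ X : Fin N → Matrix d d ℂ, (∀ i, (X i).PosDef) →
        mpow (∑ i, mpow (X i) 1) (1 / 1) = ∑ i, X i := by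
      intro X hX
      rw [Finset.sum_congr rfl fun i _ => mpow_one (hX i).1, div_one,
        mpow_one (sum_posDef hN hX).1]
    rw [hs A hA, hs B hB, hs _ fun i => (hA i).add (hB i), Finset.sum_add_distrib,
      Matrix.trace_add, Complex.add_re]
  have hp : p ∈ Set.Ioo (0 : ℝ) 1 := ⟨hp0, hp1⟩
  have hX := sum_posDef hN fun i => mpow_posDef (hA i) p
  have hX' := sum_posDef hN fun i => mpow_posDef (hB i) p
  have hY := sum_posDef hN fun i => mpow_posDef ((hA i).add (hB i)) p
  have hZ := mpow_posDef hX (1 / p)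
  have hW := mpow_posDef hX' (1 / p)
  have e1 := congrArg (fun M => M.trace.re) (mul_mpow hp0 hX)
  have e2 := congrArg (fun M => M.trace.re) (mul_mpow hp0 hX')
  have hy := young hp hY (hZ.add hW)
  generalize mpow (∑ i, mpow (A i) p) (1 / p) = Z at *
  generalize mpow (∑ i, mpow (B i) p) (1 / p) = W at *
  have hl := Finset.sum_le_sum fun i (_ : i ∈ Finset.univ) => lieb hp (hA i) (hB i) hZ hW
  simp only [Finset.sum_mul, Matrix.trace_sum, Complex.re_sum] at e1 e2 hy
  rw [Finset.sum_add_distrib, e1, e2] at hl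
  rw [Matrix.trace_add, Complex.add_re] at hy
  have := hl.trans hy
  refine le_of_mul_le_mul_left ?_ hp0
  linarith
end

section
/- For positive definite matrices A₁,…,A_n, B₁,…,B_n and 1 ≤ p ≤ 2, Tr[(Σᵢ (Aᵢ+Bᵢ)^p)^{1/p}] ≤ Tr[(Σᵢ Aᵢ^p)^{1/p}] + Tr[(Σᵢ Bᵢ^p)^{1/p}]. -/
open scoped ComplexOrder Kronecker

namespace CL
open Matrix
variable {d : Type*} [Fintype d] [DecidableEq d]

theorem cfc_spec {A : Matrix d d ℂ} (hA : A.IsHermitian) (f : ℝ → ℝ) :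
    cfc f A = (hA.eigenvectorUnitary : Matrix d d ℂ) *
      diagonal (fun i => (f (hA.eigenvalues i) : ℂ)) * (hA.eigenvectorUnitary : Matrix d d ℂ)ᴴ := by
  rw [hA.cfc_eq]
  simp [Matrix.IsHermitian.cfc, Unitary.conjStarAlgAut_apply, Matrix.star_eq_conjTranspose]
  rfl

/-- overlap coefficients of the eigenbases -/
noncomputable def ov {A Y : Matrix d d ℂ} (hA : A.IsHermitian) (hY : Y.IsHermitian) :
    Matrix d d ℂ :=
  (hA.eigenvectorUnitary : Matrix d d ℂ)ᴴ * (hY.eigenvectorUnitary : Matrix d d ℂ)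

theorem trace_diag (D E : d → ℝ) (Q R : Matrix d d ℂ) :
    (diagonal (fun i => (D i : ℂ)) * Q * diagonal (fun i => (E i : ℂ)) * Rᴴ).trace =
      ∑ i, ∑ j, (D i * E j : ℂ) * (Q i j * star (R i j)) := by
  simp only [Matrix.trace, Matrix.diag]
  refine Finset.sum_congr rfl fun i _ => ?_
  rw [Matrix.mul_apply]
  refine Finset.sum_congr rfl fun j _ => ?_
  rw [Matrix.mul_diagonal, Matrix.diagonal_mul, Matrix.conjTranspose_apply]
  ring

theorem trace_diag_re (D E : d → ℝ) (Q : Matrix d d ℂ) :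
    (diagonal (fun i => (D i : ℂ)) * Q * diagonal (fun i => (E i : ℂ)) * Qᴴ).trace.re =
      ∑ i, ∑ j, D i * E j * Complex.normSq (Q i j) := by
  rw [trace_diag]
  simp only [Complex.re_sum]
  refine Finset.sum_congr rfl fun i _ => Finset.sum_congr rfl fun j _ => ?_
  rw [show star (Q i j) = (starRingEnd ℂ) (Q i j) from rfl, Complex.mul_conj]
  norm_cast

theorem trace_cfc_mul {A Y : Matrix d d ℂ} (hA : A.IsHermitian) (hY : Y.IsHermitian)
    (f g : ℝ → ℝ) : (cfc f A * cfc g Y).trace.re =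
      ∑ i, ∑ j, f (hA.eigenvalues i) * g (hY.eigenvalues j) * Complex.normSq (ov hA hY i j) := by
  rw [← trace_diag_re (fun i => f (hA.eigenvalues i)) (fun j => g (hY.eigenvalues j)),
    cfc_spec hA, cfc_spec hY, ov, Matrix.conjTranspose_mul, Matrix.conjTranspose_conjTranspose]
  generalize (hA.eigenvectorUnitary : Matrix d d ℂ) = U
  generalize (hY.eigenvectorUnitary : Matrix d d ℂ) = V
  generalize diagonal (fun i => (f (hA.eigenvalues i) : ℂ)) = D
  generalize diagonal (fun i => (g (hY.eigenvalues i) : ℂ)) = E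
  rw [show U * D * Uᴴ * (V * E * Vᴴ) = U * (D * Uᴴ * (V * E * Vᴴ)) by
    simp only [Matrix.mul_assoc], Matrix.trace_mul_comm]
  simp only [Matrix.mul_assoc]

theorem self_spec {A : Matrix d d ℂ} (hA : A.IsHermitian) :
    A = (hA.eigenvectorUnitary : Matrix d d ℂ) *
      diagonal (fun i => (hA.eigenvalues i : ℂ)) * (hA.eigenvectorUnitary : Matrix d d ℂ)ᴴ := by
  conv_lhs => rw [← cfc_id' ℝ A hA]
  exact cfc_spec hA _

theorem U1 {A : Matrix d d ℂ} (hA : A.IsHermitian) : (hA.eigenvectorUnitary : Matrix d d ℂ) * 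
    (hA.eigenvectorUnitary : Matrix d d ℂ)ᴴ = 1 := Unitary.coe_mul_star_self _
theorem U2 {A : Matrix d d ℂ} (hA : A.IsHermitian) : (hA.eigenvectorUnitary : Matrix d d ℂ)ᴴ * 
    (hA.eigenvectorUnitary : Matrix d d ℂ) = 1 := Unitary.coe_star_mul_self _

/-- Linear-in-(A,Y) functional. -/
noncomputable def lin (α β : ℝ) (W A Y : Matrix d d ℂ) : ℝ :=
  2 * (A * W).trace.re - α * (Wᴴ * A * W).trace.re - β * (W * Y * Wᴴ).trace.re

theorem lin_add (α β : ℝ) (W A Y B Z : Matrix d d ℂ) :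
    lin α β W (A + B) (Y + Z) = lin α β W A Y + lin α β W B Z := by
  simp only [lin, Matrix.add_mul, Matrix.mul_add, Matrix.trace_add, Complex.add_re]; ring

theorem lin_coord (α β : ℝ) {A Y : Matrix d d ℂ} (hA : A.IsHermitian) (hY : Y.IsHermitian)
    (W : Matrix d d ℂ) :
    lin α β ((hA.eigenvectorUnitary : Matrix d d ℂ) * W *
      (hY.eigenvectorUnitary : Matrix d d ℂ)ᴴ) A Y =
    ∑ i, ∑ j, (2 * hA.eigenvalues i * (W i j * star (ov hA hY i j)).re -
      (α * hA.eigenvalues i + β * hY.eigenvalues j) * Complex.normSq (W i j)) := by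
  set U := (hA.eigenvectorUnitary : Matrix d d ℂ) with hU
  set V := (hY.eigenvectorUnitary : Matrix d d ℂ) with hV
  set DA := diagonal (fun i => (hA.eigenvalues i : ℂ)) with hDA
  set DY := diagonal (fun i => (hY.eigenvalues i : ℂ)) with hDY
  have eA : A = U * DA * Uᴴ := self_spec hA
  have eY : Y = V * DY * Vᴴ := self_spec hY
  have u2 : Uᴴ * U = 1 := U2 hA
  have v2 : Vᴴ * V = 1 := U2 hY
  have h1 : (A * (U * W * Vᴴ)).trace = (DA * W * diagonal (fun _ => ((1:ℝ):ℂ)) * (ov hA hY)ᴴ).trace := by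
    rw [ov, ← hU, ← hV, Matrix.conjTranspose_mul, Matrix.conjTranspose_conjTranspose]
    conv_lhs => rw [eA]
    rw [show U * DA * Uᴴ * (U * W * Vᴴ) = U * (DA * (Uᴴ * U) * W * Vᴴ) by
      simp only [Matrix.mul_assoc], u2, Matrix.trace_mul_comm]
    simp [Matrix.mul_assoc]
  have h2 : ((U * W * Vᴴ)ᴴ * A * (U * W * Vᴴ)).trace =
      (DA * W * diagonal (fun _ => ((1:ℝ):ℂ)) * Wᴴ).trace := by
    conv_lhs => rw [eA]
    simp only [Matrix.conjTranspose_mul, Matrix.conjTranspose_conjTranspose]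
    rw [show V * (Wᴴ * Uᴴ) * (U * DA * Uᴴ) * (U * W * Vᴴ) =
      V * (Wᴴ * (Uᴴ * U) * DA * (Uᴴ * U) * W * Vᴴ) by
      simp only [Matrix.mul_assoc], u2, Matrix.trace_mul_comm]
    rw [show Wᴴ * 1 * DA * 1 * W * Vᴴ * V = Wᴴ * (DA * W * (Vᴴ * V)) by
      simp only [Matrix.mul_assoc, Matrix.mul_one, Matrix.one_mul], v2, Matrix.trace_mul_comm]
    simp [Matrix.mul_assoc]
  have h3 : ((U * W * Vᴴ) * Y * (U * W * Vᴴ)ᴴ).trace =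
      (diagonal (fun _ => ((1:ℝ):ℂ)) * W * DY * Wᴴ).trace := by
    conv_lhs => rw [eY]
    simp only [Matrix.conjTranspose_mul, Matrix.conjTranspose_conjTranspose]
    rw [show (U * W * Vᴴ) * (V * DY * Vᴴ) * (V * (Wᴴ * Uᴴ)) =
      U * (W * (Vᴴ * V) * DY * (Vᴴ * V) * Wᴴ * Uᴴ) by
      simp only [Matrix.mul_assoc], v2, Matrix.trace_mul_comm]
    rw [show W * 1 * DY * 1 * Wᴴ * Uᴴ * U = W * DY * Wᴴ * (Uᴴ * U) by
      simp only [Matrix.mul_assoc, Matrix.mul_one, Matrix.one_mul], u2]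
    simp [Matrix.mul_assoc]
  rw [lin, h1, h2, h3, hDA, hDY, trace_diag_re, trace_diag_re, trace_diag]
  simp only [Complex.re_sum, Finset.mul_sum, ← Finset.sum_sub_distrib]
  refine Finset.sum_congr rfl fun i _ => Finset.sum_congr rfl fun j _ => ?_
  rw [← Complex.ofReal_mul, Complex.re_ofReal_mul]
  ring

/-- `⟨A, (α L_A + β R_Y)⁻¹ A⟩` -/
noncomputable def F (α β : ℝ) {A Y : Matrix d d ℂ} (hA : A.IsHermitian) (hY : Y.IsHermitian) : ℝ :=
  ∑ i, ∑ j, (hA.eigenvalues i) ^ 2 / (α * hA.eigenvalues i + β * hY.eigenvalues j) *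
    Complex.normSq (ov hA hY i j)

theorem scal (a m : ℝ) (hm : 0 < m) (w u : ℂ) :
    2 * a * (w * star u).re - m * Complex.normSq w ≤ a ^ 2 / m * Complex.normSq u := by
  have : a ^ 2 / m * Complex.normSq u - (2 * a * (w * star u).re - m * Complex.normSq w) =
    ((a * u.re - m * w.re) ^ 2 + (a * u.im - m * w.im) ^ 2) / m := by
    simp [Complex.normSq_apply]
    field_simp
    ring
  have h2 : 0 ≤ ((a * u.re - m * w.re) ^ 2 + (a * u.im - m * w.im) ^ 2) / m := by positivity
  linarith

theorem scal_eq (a m : ℝ) (hm : 0 < m) (u : ℂ) :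
    2 * a * ((((a / m : ℝ) : ℂ) * u) * star u).re - m * Complex.normSq (((a / m : ℝ) : ℂ) * u) =
     a ^ 2 / m * Complex.normSq u := by
  rw [show star u = (starRingEnd ℂ) u from rfl, mul_assoc (((a / m : ℝ) : ℂ)), Complex.mul_conj,
    map_mul, Complex.normSq_ofReal]
  rw [Complex.re_ofReal_mul, Complex.ofReal_re]
  field_simp
  ring

theorem den_pos {α β : ℝ} (hα : 0 ≤ α) (hβ : 0 ≤ β) (hαβ : 0 < α + β) {a y : ℝ} (ha : 0 < a)
    (hy : 0 < y) : 0 < α * a + β * y := by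
  rcases hα.lt_or_eq with h | h
  · positivity
  · subst h; have : 0 < β := by linarith
    positivity

theorem lin_le_F {α β : ℝ} (hα : 0 ≤ α) (hβ : 0 ≤ β) (hαβ : 0 < α + β) {A Y : Matrix d d ℂ}
    (hA : A.PosDef) (hY : Y.PosDef) (W : Matrix d d ℂ) : lin α β W A Y ≤ F α β hA.1 hY.1 := by
  set U := (hA.1.eigenvectorUnitary : Matrix d d ℂ) with hU
  set V := (hY.1.eigenvectorUnitary : Matrix d d ℂ) with hV
  have : W = U * (Uᴴ * W * V) * Vᴴ := by
    rw [show U * (Uᴴ * W * V) * Vᴴ = (U * Uᴴ) * W * (V * Vᴴ) by simp only [Matrix.mul_assoc],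
      hU, hV, U1, U1]; simp
  rw [this, lin_coord, F]
  refine Finset.sum_le_sum fun i _ => Finset.sum_le_sum fun j _ => ?_
  exact scal _ _ (den_pos hα hβ hαβ (hA.eigenvalues_pos i) (hY.eigenvalues_pos j)) _ _

theorem exists_lin_eq_F {α β : ℝ} (hα : 0 ≤ α) (hβ : 0 ≤ β) (hαβ : 0 < α + β) {A Y : Matrix d d ℂ}
    (hA : A.PosDef) (hY : Y.PosDef) : ∃ W, lin α β W A Y = F α β hA.1 hY.1 := by
  refine ⟨_ * (Matrix.of fun i j => ((hA.1.eigenvalues i / 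
    (α * hA.1.eigenvalues i + β * hY.1.eigenvalues j) : ℝ) : ℂ) * ov hA.1 hY.1 i j) * _,
    (lin_coord α β hA.1 hY.1 _).trans ?_⟩
  rw [F]
  refine Finset.sum_congr rfl fun i _ => Finset.sum_congr rfl fun j _ => ?_
  exact scal_eq _ _ (den_pos hα hβ hαβ (hA.eigenvalues_pos i) (hY.eigenvalues_pos j)) _

theorem F_add {α β : ℝ} (hα : 0 ≤ α) (hβ : 0 ≤ β) (hαβ : 0 < α + β) {A Y B Z : Matrix d d ℂ}
    (hA : A.PosDef) (hY : Y.PosDef) (hB : B.PosDef) (hZ : Z.PosDef) :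
    F α β (hA.add hB).1 (hY.add hZ).1 ≤ F α β hA.1 hY.1 + F α β hB.1 hZ.1 := by
  obtain ⟨W, hW⟩ := exists_lin_eq_F hα hβ hαβ (hA.add hB) (hY.add hZ)
  rw [← hW, lin_add]
  exact add_le_add (lin_le_F hα hβ hαβ hA hY W) (lin_le_F hα hβ hαβ hB hZ W)


noncomputable def G (p : ℝ) (A Y : Matrix d d ℂ) : ℝ := (mpow A p * mpow Y (1 - p)).trace.re

theorem G_eq (p : ℝ) {A Y : Matrix d d ℂ} (hA : A.IsHermitian) (hY : Y.IsHermitian) :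
    G p A Y = ∑ i, ∑ j, hA.eigenvalues i ^ p * hY.eigenvalues j ^ (1 - p) *
      Complex.normSq (ov hA hY i j) :=
  trace_cfc_mul hA hY _ _

open MeasureTheory Real in
theorem scal_int {p : ℝ} (h1 : 1 < p) (h2 : p < 2) {a y : ℝ} (ha : 0 < a) (hy : 0 < y) :
    IntegrableOn (fun t : ℝ => t ^ (p - 1 - 1) * (a ^ 2 / (1 * a + t * y))) (Set.Ioi 0) ∧
    a ^ p * y ^ (1 - p) = (∫ t in Set.Ioi 0, rpowIntegrand₀₁ (p - 1) t 1)⁻¹ *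
      ∫ t in Set.Ioi 0, t ^ (p - 1 - 1) * (a ^ 2 / (1 * a + t * y)) := by
  have hq : p - 1 ∈ Set.Ioo (0:ℝ) 1 := ⟨by linarith, by linarith⟩
  have hx : 0 ≤ a / y := by positivity
  have e : Set.EqOn (fun t => a * rpowIntegrand₀₁ (p - 1) t (a / y))
      (fun t : ℝ => t ^ (p - 1 - 1) * (a ^ 2 / (1 * a + t * y))) (Set.Ioi 0) := by
    intro t ht
    have ht : 0 < t := ht
    simp only
    rw [rpowIntegrand₀₁_eq_pow_div hq ht.le hx]
    have : t + a / y = (1 * a + t * y) / y := by field_simp; ring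
    rw [this]
    field_simp
  refine ⟨IntegrableOn.congr_fun ((integrableOn_rpowIntegrand₀₁_Ioi hq hx).const_mul a) e
    measurableSet_Ioi, ?_⟩
  rw [← setIntegral_congr_fun measurableSet_Ioi e, integral_const_mul]
  have h := rpow_eq_const_mul_integral hq hx
  rw [mul_left_comm, ← h, div_rpow ha.le hy.le, ← neg_sub p 1, rpow_neg hy.le]
  have : a ^ p = a * a ^ (p - 1) := by
    rw [rpow_sub_one ha.ne']; field_simp
  rw [this]; ring

open MeasureTheory Real in
theorem G_int {p : ℝ} (h1 : 1 < p) (h2 : p < 2) {A Y : Matrix d d ℂ}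
    (hA : A.PosDef) (hY : Y.PosDef) :
    IntegrableOn (fun t : ℝ => t ^ (p - 1 - 1) * F 1 t hA.1 hY.1) (Set.Ioi 0) ∧
    G p A Y = (∫ t in Set.Ioi 0, rpowIntegrand₀₁ (p - 1) t 1)⁻¹ *
      ∫ t in Set.Ioi 0, t ^ (p - 1 - 1) * F 1 t hA.1 hY.1 := by
  have key := fun i j => scal_int h1 h2 (hA.eigenvalues_pos i) (hY.eigenvalues_pos j)
  simp only [F, Finset.mul_sum, ← mul_assoc]
  have hi : ∀ i j, IntegrableOn (fun t : ℝ => t ^ (p - 1 - 1) * (hA.1.eigenvalues i ^ 2 /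
      (1 * hA.1.eigenvalues i + t * hY.1.eigenvalues j)) *
      Complex.normSq (ov hA.1 hY.1 i j)) (Set.Ioi 0) := fun i j => (key i j).1.mul_const _
  refine ⟨integrable_finsetSum _ fun i _ => integrable_finsetSum _ fun j _ => hi i j, ?_⟩
  rw [integral_finsetSum _ fun i _ => integrable_finsetSum _ fun j _ => hi i j, G_eq p hA.1 hY.1,
    Finset.mul_sum]
  refine Finset.sum_congr rfl fun i _ => ?_
  rw [integral_finsetSum _ fun j _ => hi i j, Finset.mul_sum]
  refine Finset.sum_congr rfl fun j _ => ?_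
  rw [integral_mul_const, (key i j).2]
  ring

open MeasureTheory Real in
/-- Ando's convexity theorem (subadditive form). -/
theorem G_add {p : ℝ} (h1 : 1 ≤ p) (h2 : p ≤ 2) {A Y B Z : Matrix d d ℂ}
    (hA : A.PosDef) (hY : Y.PosDef) (hB : B.PosDef) (hZ : Z.PosDef) :
    G p (A + B) (Y + Z) ≤ G p A Y + G p B Z := by
  rcases h1.eq_or_lt with rfl | h1
  · have e : ∀ {A Y : Matrix d d ℂ} (hA : A.PosDef) (hY : Y.PosDef),
        G 1 A Y = F 1 0 hA.1 hY.1 := by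
      intro A Y hA hY
      rw [G_eq 1 hA.1 hY.1, F]
      refine Finset.sum_congr rfl fun i _ => Finset.sum_congr rfl fun j _ => ?_
      have := hA.eigenvalues_pos i
      simp only [rpow_one, sub_self, rpow_zero, one_mul, zero_mul, add_zero]
      field_simp
    rw [e (hA.add hB) (hY.add hZ), e hA hY, e hB hZ]
    exact F_add (by norm_num) (by norm_num) (by norm_num) hA hY hB hZ
  rcases h2.eq_or_lt with rfl | h2
  · have e : ∀ {A Y : Matrix d d ℂ} (hA : A.PosDef) (hY : Y.PosDef),
        G 2 A Y = F 0 1 hA.1 hY.1 := by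
      intro A Y hA hY
      rw [G_eq 2 hA.1 hY.1, F]
      refine Finset.sum_congr rfl fun i _ => Finset.sum_congr rfl fun j _ => ?_
      have := hY.eigenvalues_pos j
      rw [show (1 - 2 : ℝ) = -1 by norm_num, rpow_neg_one, rpow_two, zero_mul, zero_add, one_mul]
      rfl
    rw [e (hA.add hB) (hY.add hZ), e hA hY, e hB hZ]
    exact F_add (by norm_num) (by norm_num) (by norm_num) hA hY hB hZ
  obtain ⟨i1, e1⟩ := G_int h1 h2 hA hY
  obtain ⟨i2, e2⟩ := G_int h1 h2 hB hZ
  obtain ⟨i3, e3⟩ := G_int h1 h2 (hA.add hB) (hY.add hZ)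
  rw [e1, e2, e3, ← mul_add, ← integral_add i1 i2]
  have hq : p - 1 ∈ Set.Ioo (0:ℝ) 1 := ⟨by linarith, by linarith⟩
  refine mul_le_mul_of_nonneg_left ?_ (inv_nonneg.2 (integral_rpowIntegrand₀₁_one_pos hq).le)
  refine setIntegral_mono_on i3 (i1.add i2) measurableSet_Ioi fun t ht => ?_
  have ht : 0 < t := ht
  rw [← mul_add]
  exact mul_le_mul_of_nonneg_left (F_add (by norm_num) ht.le (by linarith) hA hY hB hZ)
    (by positivity)

theorem spec_pos {A : Matrix d d ℂ} (hA : A.PosDef) {x : ℝ} (hx : x ∈ spectrum ℝ A) : 0 < x := by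
  rw [hA.1.spectrum_real_eq_range_eigenvalues] at hx
  obtain ⟨i, rfl⟩ := hx
  exact hA.eigenvalues_pos i

theorem mpow_posDef {A : Matrix d d ℂ} (hA : A.PosDef) (p : ℝ) : (mpow A p).PosDef := by
  rw [mpow, cfc_spec hA.1]
  have hu : IsUnit ((hA.1.eigenvectorUnitary : Matrix d d ℂ)) :=
    ⟨⟨_, _, U1 hA.1, U2 hA.1⟩, rfl⟩
  refine (hu.posDef_star_right_conjugate_iff).2 ?_
  refine Matrix.PosDef.diagonal fun i => ?_
  have := Real.rpow_pos_of_pos (hA.eigenvalues_pos i) p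
  exact_mod_cast this

theorem mpow_mpow {A : Matrix d d ℂ} (hA : A.PosDef) (p q : ℝ) :
    mpow (mpow A p) q = mpow A (p * q) := by
  have hf : ∀ s : Set ℝ, (∀ x ∈ s, 0 < x) → ∀ r : ℝ, ContinuousOn (fun x : ℝ => x ^ r) s :=
    fun s hs r => continuousOn_id.rpow_const fun x hx => Or.inl (hs x hx).ne'
  unfold mpow
  rw [← cfc_comp' (fun x : ℝ => x ^ q) (fun x : ℝ => x ^ p) A ?_ ?_
    hA.1.isSelfAdjoint]
  · exact cfc_congr fun x hx => (Real.rpow_mul (spec_pos hA hx).le p q).symm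
  · refine hf _ ?_ _
    rintro _ ⟨x, hx, rfl⟩
    exact Real.rpow_pos_of_pos (spec_pos hA hx) p
  · exact hf _ (fun x hx => spec_pos hA hx) _

theorem mpow_mul {A : Matrix d d ℂ} (hA : A.PosDef) (p q : ℝ) :
    mpow A p * mpow A q = mpow A (p + q) := by
  have hf : ∀ r : ℝ, ContinuousOn (fun x : ℝ => x ^ r) (spectrum ℝ A) :=
    fun r => continuousOn_id.rpow_const fun x hx => Or.inl (spec_pos hA hx).ne'
  unfold mpow
  rw [← cfc_mul _ _ A (hf _) (hf _)]
  exact cfc_congr fun x hx => (Real.rpow_add (spec_pos hA hx) p q).symm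

theorem mpow_one {A : Matrix d d ℂ} (hA : A.PosDef) : mpow A 1 = A := by
  simp only [mpow, Real.rpow_one]
  exact cfc_id' ℝ A hA.1

theorem mpow_zero {A : Matrix d d ℂ} (hA : A.PosDef) : mpow A 0 = 1 := by
  simp only [mpow, Real.rpow_zero]
  exact cfc_const_one ℝ A hA.1

/-- Variational upper bound. -/
theorem young {p : ℝ} (h1 : 1 ≤ p) {X W : Matrix d d ℂ} (hX : X.PosDef) (hW : W.PosDef) :
    (mpow X (1 / p)).trace.re ≤
      1 / p * (X * mpow W (1 - p)).trace.re + (1 - 1 / p) * W.trace.re := by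
  have e1 : (mpow X (1 / p)).trace.re = (mpow X (1 / p) * mpow W 0).trace.re := by
    rw [mpow_zero hW, mul_one]
  have e2 : (X * mpow W (1 - p)).trace.re = (mpow X 1 * mpow W (1 - p)).trace.re := by
    rw [mpow_one hX]
  have e3 : W.trace.re = (mpow X 0 * mpow W 1).trace.re := by
    rw [mpow_zero hX, mpow_one hW, one_mul]
  have hp : 0 < p := by linarith
  rw [e1, e2, e3]
  unfold mpow
  simp only [trace_cfc_mul hX.1 hW.1, Finset.mul_sum, ← Finset.sum_add_distrib]
  refine Finset.sum_le_sum fun i _ => Finset.sum_le_sum fun j _ => ?_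
  have hx := hX.eigenvalues_pos i
  have hw := hW.eigenvalues_pos j
  generalize hX.1.eigenvalues i = x at hx
  generalize hW.1.eigenvalues j = w at hw
  have hN := Complex.normSq_nonneg (ov hX.1 hW.1 i j)
  have hg := Real.geom_mean_le_arith_mean2_weighted (w₁ := 1 / p) (w₂ := 1 - 1 / p)
    (p₁ := x * w ^ (1 - p)) (p₂ := w) (by positivity)
    (by rw [sub_nonneg, div_le_one hp]; exact h1) (by positivity) hw.le (by ring)
  have : (x * w ^ (1 - p)) ^ (1 / p) * w ^ (1 - 1 / p) = x ^ (1 / p) := by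
    rw [Real.mul_rpow hx.le (by positivity), ← Real.rpow_mul hw.le, mul_assoc,
      ← Real.rpow_add hw, show (1 - p) * (1 / p) + (1 - 1 / p) = 0 by field_simp; ring,
      Real.rpow_zero, mul_one]
  rw [this] at hg
  simp only [Real.rpow_zero, Real.rpow_one, mul_one, one_mul]
  nlinarith [mul_le_mul_of_nonneg_right hg hN]

theorem sum_posDef {N : ℕ} (hN : N ≠ 0) (A : Fin N → Matrix d d ℂ) (hA : ∀ i, (A i).PosDef) :
    (∑ i, A i).PosDef := by
  have : NeZero N := ⟨hN⟩
  exact Matrix.posDef_sum Finset.univ_nonempty fun i _ => hA i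

/-- The optimal choice in the variational formula. -/
theorem opt {p : ℝ} (h1 : 1 ≤ p) {X : Matrix d d ℂ} (hX : X.PosDef) :
    X * mpow (mpow X (1 / p)) (1 - p) = mpow X (1 / p) := by
  have hp : p ≠ 0 := by linarith
  rw [mpow_mpow hX]
  nth_rw 1 [← mpow_one hX]
  rw [mpow_mul hX]
  congr 1
  field_simp
  ring

theorem sum_G {N : ℕ} {p : ℝ} (A : Fin N → Matrix d d ℂ) (W : Matrix d d ℂ) :
    ((∑ i, mpow (A i) p) * mpow W (1 - p)).trace.re = ∑ i, G p (A i) W := by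
  rw [Finset.sum_mul, Matrix.trace_sum, Complex.re_sum]
  rfl

end CL

theorem carlen_lieb_trace_minkowski_convex {d : Type*} [Fintype d] [DecidableEq d]
    (N : ℕ) (A B : Fin N → Matrix d d ℂ)
    (hA : ∀ i, (A i).PosDef) (hB : ∀ i, (B i).PosDef)
    (p : ℝ) (hp1 : 1 ≤ p) (hp2 : p ≤ 2) :
    (mpow (∑ i, mpow (A i + B i) p) (1/p)).trace.re ≤
      (mpow (∑ i, mpow (A i) p) (1/p)).trace.re
        + (mpow (∑ i, mpow (B i) p) (1/p)).trace.re := by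
  rcases eq_or_ne N 0 with rfl | hN
  · have hp : (p⁻¹ : ℝ) ≠ 0 := by positivity
    have : mpow (0 : Matrix d d ℂ) p⁻¹ = 0 := by
      unfold mpow
      rw [cfc_apply_zero, Real.zero_rpow hp, map_zero]
    simp [this]
  set X := ∑ i, mpow (A i) p with hXd
  set X' := ∑ i, mpow (B i) p with hXd'
  have hX : X.PosDef := CL.sum_posDef hN _ fun i => CL.mpow_posDef (hA i) p
  have hX' : X'.PosDef := CL.sum_posDef hN _ fun i => CL.mpow_posDef (hB i) p
  have hS : (∑ i, mpow (A i + B i) p).PosDef :=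
    CL.sum_posDef hN _ fun i => CL.mpow_posDef ((hA i).add (hB i)) p
  have hY := CL.mpow_posDef hX (1 / p)
  have hZ := CL.mpow_posDef hX' (1 / p)
  have h := CL.young hp1 hS (hY.add hZ)
  rw [CL.sum_G (fun i => A i + B i)] at h
  have h2 : ∑ i, CL.G p (A i + B i) (mpow X (1 / p) + mpow X' (1 / p)) ≤
      (mpow X (1 / p)).trace.re + (mpow X' (1 / p)).trace.re := by
    calc _ ≤ ∑ i, (CL.G p (A i) (mpow X (1 / p)) + CL.G p (B i) (mpow X' (1 / p))) :=
          Finset.sum_le_sum fun i _ => CL.G_add hp1 hp2 (hA i) hY (hB i) hZ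
      _ = _ := by
          rw [Finset.sum_add_distrib, ← CL.sum_G, ← CL.sum_G, ← hXd, ← hXd', CL.opt hp1 hX,
            CL.opt hp1 hX']
  have hp : 0 ≤ 1 / p := by positivity
  rw [Matrix.trace_add, Complex.add_re] at h
  have := mul_le_mul_of_nonneg_left h2 hp
  linarith
end
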